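/- arXiv:1401.3286 — 8 statements merged into one kernel-verified Lean document; each statement's English description precedes it below -/
import Mathlib

section
/- Let Δ ≥ 0 and let w : ℕ≥1 → ℝ be a sequence of positive real numbers such that for every σ > Δ there exists a constant C_σ > 0 with w_n^{-1} n^{-2σ} ≤ C_σ for every n ≥ 1. Then for every natural number N ≥ 1 and every σ > Δ, the series ∑_{n ∈ ⟨P_N⟩} w_n^{-1} n^{-2σ} converges (i.e. the family (w_n^{-1} n^{-2σ})_{n ∈ ⟨P_N⟩} is summable). -/
/-- `⟨P_N⟩`: the set of positive integers all of whose prime factors lie among the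
first `N` primes. -/
def smoothSet (N : ℕ) : Set ℕ :=
  {n : ℕ | 0 < n ∧ ∀ p : ℕ, p.Prime → p ∣ n → ∃ j < N, p = Nat.nth Nat.Prime j}

/-!
Choose `τ` with `Δ < τ < σ`. The growth condition at `τ` gives
`w_n⁻¹ n^{-2σ} = O(n^{-2(σ - τ)})`, and for `ε > 0` the series of `n^{-ε}` over the integers with
prime factors in a finite set `s` is a finite Euler product, that is, a finite product of convergent
geometric series.
-/

open Asymptotics Filter

lemma summable_rpow_neg_factoredNumbers {ε : ℝ} (hε : 0 < ε) (s : Finset ℕ) :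
    Summable fun n : Nat.factoredNumbers s => ((n : ℕ) : ℝ) ^ (-ε) := by
  let f : ℕ →* ℝ :=
    { toFun n := (n : ℝ) ^ (-ε)
      map_one' := by rw [Nat.cast_one, Real.one_rpow]
      map_mul' m n := by rw [Nat.cast_mul, Real.mul_rpow m.cast_nonneg n.cast_nonneg] }
  have norm_f_prime_lt_one {p : ℕ} (hp : p.Prime) : ‖f p‖ < 1 := by
    change ‖(p : ℝ) ^ (-ε)‖ < 1
    rw [Real.norm_of_nonneg (Real.rpow_nonneg p.cast_nonneg _)]
    exact Real.rpow_lt_one_of_one_lt_of_neg (Nat.one_lt_cast.2 hp.one_lt) (neg_lt_zero.2 hε)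
  exact (EulerProduct.summable_and_hasSum_factoredNumbers_prod_filter_prime_geometric
    norm_f_prime_lt_one s).1.of_norm

section VectorValued

variable {E : Type*} [SeminormedAddCommGroup E] [NormedSpace ℝ E] {a : ℕ → E}

lemma isBigO_rpow_neg_smul {τ : ℝ} (ha : a =O[atTop] fun n => (n : ℝ) ^ τ) (σ : ℝ) :
    (fun n : ℕ => (n : ℝ) ^ (-σ) • a n) =O[atTop] fun n => (n : ℝ) ^ (-(σ - τ)) := by
  refine ((isBigO_refl (fun n : ℕ => (n : ℝ) ^ (-σ)) atTop).smul ha).trans_eventuallyEq ?_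
  filter_upwards [eventually_gt_atTop 0] with n hn
  rw [smul_eq_mul, ← Real.rpow_add (Nat.cast_pos.2 hn), neg_sub, neg_add_eq_sub]

variable [CompleteSpace E]

lemma summable_rpow_neg_smul_factoredNumbers {σ τ : ℝ} (hτσ : τ < σ)
    (ha : a =O[atTop] fun n => (n : ℝ) ^ τ) (s : Finset ℕ) :
    Summable fun n : Nat.factoredNumbers s => ((n : ℕ) : ℝ) ^ (-σ) • a n := by
  have hO := isBigO_rpow_neg_smul ha σ
  rw [← Nat.cofinite_eq_atTop] at hO
  exact summable_of_isBigO (summable_rpow_neg_factoredNumbers (sub_pos.2 hτσ) s)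
    (hO.comp_tendsto Subtype.val_injective.tendsto_cofinite)

theorem stmt_3_general {Δ : ℝ}
    (hgrowth : ∀ σ : ℝ, Δ < σ → a =O[atTop] fun n => (n : ℝ) ^ (2 * σ))
    (s : Finset ℕ) {σ : ℝ} (hσ : Δ < σ) :
    Summable fun n : Nat.factoredNumbers s => ((n : ℕ) : ℝ) ^ (-(2 * σ)) • a n := by
  obtain ⟨τ, hΔτ, hτσ⟩ := exists_between hσ
  exact summable_rpow_neg_smul_factoredNumbers (by gcongr) (hgrowth τ hΔτ) s

end VectorValued

lemma isBigO_rpow_of_mul_rpow_neg_le {a : ℕ → ℝ} {σ C : ℝ} (ha : ∀ᶠ n in atTop, 0 ≤ a n)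
    (hC : ∀ᶠ n : ℕ in atTop, a n * (n : ℝ) ^ (-σ) ≤ C) :
    a =O[atTop] fun n => (n : ℝ) ^ σ := by
  refine IsBigO.of_bound C ?_
  filter_upwards [ha, hC, eventually_gt_atTop 0] with n han hCn hn
  have hpow : 0 < (n : ℝ) ^ σ := Real.rpow_pos_of_pos (Nat.cast_pos.2 hn) σ
  rw [Real.norm_of_nonneg han, Real.norm_of_nonneg hpow.le, ← div_le_iff₀ hpow, div_eq_mul_inv,
    ← Real.rpow_neg n.cast_nonneg]
  exact hCn

lemma smoothSet_eq_factoredNumbers (N : ℕ) :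
    smoothSet N = Nat.factoredNumbers ((Finset.range N).image (Nat.nth Nat.Prime)) := by
  ext n
  have nth_prime_iff (p : ℕ) : (∃ j < N, p = Nat.nth Nat.Prime j) ↔
      p ∈ (Finset.range N).image (Nat.nth Nat.Prime) := by
    simp only [Finset.mem_image, Finset.mem_range, eq_comm]
  simp only [smoothSet, Set.mem_ofPred_eq, nth_prime_iff, ← Nat.mem_factoredNumbers']
  exact and_iff_right_of_imp fun hn => Nat.pos_of_ne_zero (Nat.ne_zero_of_mem_factoredNumbers hn)

/-- If `Δ ≥ 0` and the positive weights `w_n` satisfy the growth condition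
`w_n⁻¹ n^{-2σ} ≤ C_σ` (for all `n ≥ 1`) for every `σ > Δ`, then for every `N ≥ 1`
and every `σ > Δ`, the family `(w_n⁻¹ n^{-2σ})_{n ∈ ⟨P_N⟩}` is summable. -/
theorem stmt_3 (Δ : ℝ) (hΔ : 0 ≤ Δ) (w : ℕ → ℝ) (hw : ∀ n : ℕ, 1 ≤ n → 0 < w n)
    (hgrowth : ∀ σ : ℝ, Δ < σ → ∃ C : ℝ, 0 < C ∧
      ∀ n : ℕ, 1 ≤ n → (w n)⁻¹ * (n : ℝ) ^ (-(2 * σ)) ≤ C) :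
    ∀ N : ℕ, 1 ≤ N → ∀ σ : ℝ, Δ < σ →
      Summable (fun n : smoothSet N => (w n)⁻¹ * ((n : ℕ) : ℝ) ^ (-(2 * σ))) := by
  intro N _ σ hσ
  have w_inv_isBigO (τ : ℝ) (hτ : Δ < τ) :
      (fun n => (w n)⁻¹) =O[atTop] fun n => (n : ℝ) ^ (2 * τ) := by
    obtain ⟨C, -, hC⟩ := hgrowth τ hτ
    exact isBigO_rpow_of_mul_rpow_neg_le
      ((eventually_ge_atTop 1).mono fun n hn => (inv_pos.2 (hw n hn)).le)
      ((eventually_ge_atTop 1).mono hC)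
  rw [smoothSet_eq_factoredNumbers]
  simpa only [smul_eq_mul, mul_comm] using stmt_3_general w_inv_isBigO _ hσ
end

section
/- Let μ be a nonzero finite Borel measure on [0,∞) and for each positive integer n set w_n = ∫_0^∞ n^{-2σ} dμ(σ), assumed finite for every n ≥ 1. If the sequence {w_n} is completely multiplicative, i.e. w_{mn} = w_m · w_n for all positive integers m and n, then μ is a Dirac point mass: there exists c ≥ 0 such that μ is the Dirac measure at c. -/
open MeasureTheory

/-!
A completely multiplicative `w` has `w 1 = 1`, so `μ` is a probability measure, and `w 4 = w 2 ^ 2`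
says that the random variable `t ↦ 2 ^ (-2t)` has variance zero. It is therefore almost surely
constant, and since it is injective, so is `t` itself.
-/

open ProbabilityTheory

section

variable {α : Type*} [MeasurableSpace α] {μ : Measure α}

theorem isProbabilityMeasure_of_isIdempotentElem [IsFiniteMeasure μ] (hμ : μ ≠ 0)
    (hidem : IsIdempotentElem (μ.real Set.univ)) : IsProbabilityMeasure μ := by
  have hmass : μ.real Set.univ ≠ 0 := by simpa [measureReal_eq_zero_iff] using hμ
  have hmass_one := (IsIdempotentElem.iff_eq_zero_or_one.mp hidem).resolve_left hmass
  exact isProbabilityMeasure_iff_real.mpr hmass_one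

theorem ae_eq_integral_of_integral_sq_eq [IsProbabilityMeasure μ] {X : α → ℝ} (hX : MemLp X 2 μ)
    (hsq : ∫ a, X a ^ 2 ∂μ = (∫ a, X a ∂μ) ^ 2) : X =ᵐ[μ] fun _ ↦ ∫ a, X a ∂μ := by
  refine ae_eq_integral_of_variance_eq_zero hX ?_
  rw [variance_eq_sub hX]
  exact sub_eq_zero.mpr hsq

theorem exists_eq_dirac_of_injective_of_ae_eq_const [IsProbabilityMeasure μ] {β : Type*}
    {f : α → β} (hf : f.Injective) {b : β} (hconst : f =ᵐ[μ] fun _ ↦ b) :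
    ∃ c, μ = Measure.dirac c := by
  obtain ⟨c, hc⟩ := hconst.exists
  have hid : id =ᵐ[μ] fun _ ↦ c := hconst.mono fun a ha ↦ hf (ha.trans hc.symm)
  exact ⟨c, by simpa using Measure.map_congr hid⟩

end

theorem rpow_neg_two_mul_injective {b : ℝ} (hb : 0 < b) (hb1 : b ≠ 1) :
    Function.Injective fun t : ℝ ↦ b ^ (-(2 * t)) := fun s t hst ↦ by
  simpa using (Real.rpow_right_inj hb hb1).mp hst

theorem stmt_4_general (μ : Measure ℝ) [IsFiniteMeasure μ] (hμ : μ ≠ 0)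
    (hmass : IsIdempotentElem (μ.real Set.univ)) {b : ℝ} (hb : 0 < b) (hb1 : b ≠ 1)
    (hint : Integrable (fun t : ℝ ↦ (b ^ 2) ^ (-(2 * t))) μ)
    (hsq : ∫ t, (b ^ 2) ^ (-(2 * t)) ∂μ = (∫ t, b ^ (-(2 * t)) ∂μ) ^ 2) :
    ∃ c : ℝ, μ = Measure.dirac c := by
  have := isProbabilityMeasure_of_isIdempotentElem hμ hmass
  simp only [← Real.rpow_pow_comm hb.le] at hint hsq
  have hmeas : Measurable fun t : ℝ ↦ b ^ (-(2 * t)) := by fun_prop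
  have hL2 := (memLp_two_iff_integrable_sq hmeas.aestronglyMeasurable).mpr hint
  exact exists_eq_dirac_of_injective_of_ae_eq_const (rpow_neg_two_mul_injective hb hb1)
    (ae_eq_integral_of_integral_sq_eq hL2 hsq)

/-- If `μ` is a nonzero finite Borel measure on `[0,∞)` (modelled as a measure on `ℝ`
vanishing on `(-∞,0)`), the weights `w_n = ∫ n^{-2t} dμ(t)` are all finite (i.e. the
integrands are integrable), and the sequence `w_n` is completely multiplicative, then
`μ` is a Dirac point mass at some `c ≥ 0`. -/
theorem stmt_4 (μ : Measure ℝ) [IsFiniteMeasure μ] (hμ : μ ≠ 0)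
    (hsupp : μ (Set.Iio (0 : ℝ)) = 0)
    (hint : ∀ n : ℕ, 1 ≤ n → Integrable (fun t : ℝ => (n : ℝ) ^ (-(2 * t))) μ)
    (w : ℕ → ℝ) (hw : ∀ n : ℕ, 1 ≤ n → w n = ∫ t, (n : ℝ) ^ (-(2 * t)) ∂μ)
    (hmult : ∀ m n : ℕ, 1 ≤ m → 1 ≤ n → w (m * n) = w m * w n) :
    ∃ c : ℝ, 0 ≤ c ∧ μ = Measure.dirac c := by
  have hmass : IsIdempotentElem (μ.real Set.univ) := by
    simpa [IsIdempotentElem, hw] using (hmult 1 1 le_rfl le_rfl).symm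
  have hint_four := hint (2 * 2) (by norm_num)
  have hw_four := hmult 2 2 one_le_two one_le_two
  rw [hw (2 * 2) (by norm_num), hw 2 one_le_two] at hw_four
  simp only [← pow_two, Nat.cast_pow, Nat.cast_ofNat] at hint_four hw_four
  obtain ⟨c, rfl⟩ := stmt_4_general μ hμ hmass two_pos (by norm_num) hint_four hw_four
  exact ⟨c, by simpa using hsupp, rfl⟩
end

section
/- There is no positive Borel measure μ on [0,∞) such that 1/d(n) = ∫_0^∞ n^{-2σ} dμ(σ) for every positive integer n, where d(n) denotes the number of positive divisors of n. -/
/-!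
For `σ ≥ 0` the function `n ↦ n ^ (-2σ)` is nonincreasing, hence so is every positive sequence
given by a measure on `[0,∞)`. But `1/d(4) = 1/3 < 1/2 = 1/d(5)`.
-/

open MeasureTheory

theorem integral_rpow_le_integral_rpow_of_nonpos {α : Type*} [MeasurableSpace α] {μ : Measure α}
    {f : α → ℝ} {x y : ℝ} (hf : ∀ᵐ a ∂μ, f a ≤ 0) (hx : 0 < x) (hxy : x ≤ y)
    (hint : Integrable (fun a => x ^ f a) μ) :
    ∫ a, y ^ f a ∂μ ≤ ∫ a, x ^ f a ∂μ := by
  have hy : 0 ≤ y := hx.le.trans hxy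
  refine integral_mono_of_nonneg (.of_forall fun a => Real.rpow_nonneg hy (f a)) hint ?_
  filter_upwards [hf] with a ha
  exact Real.rpow_le_rpow_of_nonpos hx hxy ha

/-- The weight sequence `w` is given by a measure on `[0,∞)`, that is,
`w n = ∫_0^∞ n^{-2σ} dμ(σ)` for all `n ≥ 1`. The measure lives on `ℝ`, only its restriction to
`[0,∞)` being used; the Bochner integral is `0` where the integrand is not integrable. -/
def IsGivenByMeasure (w : ℕ → ℝ) : Prop :=
  ∃ μ : Measure ℝ, ∀ n : ℕ, 1 ≤ n → w n = ∫ σ in Set.Ici (0 : ℝ), (n : ℝ) ^ (-(2 * σ)) ∂μ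

-- A nonzero value `w m` rules out the junk value `0` of a divergent integral.
theorem IsGivenByMeasure.le_of_le {w : ℕ → ℝ} (hw : IsGivenByMeasure w) {m n : ℕ} (hm : 1 ≤ m)
    (hmn : m ≤ n) (hwm : w m ≠ 0) : w n ≤ w m := by
  obtain ⟨μ, hμ⟩ := hw
  have hint : Integrable (fun σ : ℝ => (m : ℝ) ^ (-(2 * σ))) (μ.restrict (Set.Ici 0)) :=
    .of_integral_ne_zero (hμ m hm ▸ hwm)
  have hexp : ∀ᵐ σ ∂μ.restrict (Set.Ici (0 : ℝ)), -(2 * σ) ≤ 0 := by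
    filter_upwards [ae_restrict_mem measurableSet_Ici] with σ (hσ : 0 ≤ σ)
    linarith
  rw [hμ n (hm.trans hmn), hμ m hm]
  exact integral_rpow_le_integral_rpow_of_nonpos hexp (by exact_mod_cast hm)
    (by exact_mod_cast hmn) hint

/-- There is no positive Borel measure `μ` on `[0,∞)` such that
`1/d(n) = ∫_0^∞ n^{-2σ} dμ(σ)` for every positive integer `n`, where `d(n)` is the
number of positive divisors of `n`. -/
theorem stmt_5 :
    ¬ ∃ μ : Measure ℝ,
      ∀ n : ℕ, 1 ≤ n →
        (1 : ℝ) / (n.divisors.card : ℝ) =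
          ∫ σ in Set.Ici (0 : ℝ), (n : ℝ) ^ (-(2 * σ)) ∂μ := by
  intro (hw : IsGivenByMeasure fun n => (1 : ℝ) / (n.divisors.card : ℝ))
  have card_divisors_four : (Nat.divisors 4).card = 3 := by decide
  have card_divisors_five : (Nat.divisors 5).card = 2 := by decide
  have hle : (1 : ℝ) / (Nat.divisors 5).card ≤ 1 / (Nat.divisors 4).card :=
    hw.le_of_le (by norm_num) (by norm_num) (by simp [card_divisors_four])
  rw [card_divisors_four, card_divisors_five] at hle
  norm_num at hle
end

section
/- There is no positive Borel measure μ on [0,∞) such that 1/σ(n) = ∫_0^∞ n^{-2t} dμ(t) for every positive integer n, where σ(n) denotes the sum of the positive divisors of n. -/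
open MeasureTheory

/-!
The integrals `∫ n ^ (-2t) dμ(t)` do not increase with `n ≥ 1`, so a sequence `1/σ(n)` given by a
measure would force `σ` to be non-decreasing; but `σ(4) = 7 > 6 = σ(5)`.
-/

theorem integral_rpow_le_integral_rpow_of_exponent_nonpos {α : Type*} [MeasurableSpace α]
    {μ : Measure α} {f : α → ℝ} {x y : ℝ} (hx : 0 < x) (hxy : x ≤ y) (hf : ∀ᵐ a ∂μ, f a ≤ 0)
    (hint : Integrable (fun a => x ^ f a) μ) :
    ∫ a, y ^ f a ∂μ ≤ ∫ a, x ^ f a ∂μ :=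
  integral_mono_of_nonneg (.of_forall fun a => Real.rpow_nonneg (hx.le.trans hxy) (f a)) hint
    (hf.mono fun _ ha => Real.rpow_le_rpow_of_nonpos hx hxy ha)

theorem stmt_6_general {m n : ℕ} (hmn : m ≤ n)
    (hσ : ∑ d ∈ n.divisors, d < ∑ d ∈ m.divisors, d) :
    ¬ ∃ μ : Measure ℝ,
      (1 : ℝ) / ((∑ d ∈ m.divisors, d : ℕ) : ℝ) =
          ∫ t in Set.Ici (0 : ℝ), (m : ℝ) ^ (-(2 * t)) ∂μ ∧
        (1 : ℝ) / ((∑ d ∈ n.divisors, d : ℕ) : ℝ) =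
          ∫ t in Set.Ici (0 : ℝ), (n : ℝ) ^ (-(2 * t)) ∂μ := by
  rintro ⟨μ, h_m, h_n⟩
  have m_pos : 0 < m := Nat.pos_of_ne_zero (by rintro rfl; simp at hσ)
  have sigma_n_pos : 0 < ∑ d ∈ n.divisors, d :=
    Finset.sum_pos (fun _ => Nat.pos_of_mem_divisors)
      (Nat.nonempty_divisors.mpr (m_pos.trans_le hmn).ne')
  have weight_lt : (1 : ℝ) / (∑ d ∈ m.divisors, d : ℕ) < 1 / (∑ d ∈ n.divisors, d : ℕ) :=
    one_div_lt_one_div_of_lt (mod_cast sigma_n_pos) (mod_cast hσ)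
  -- A non-integrable function would have integral `0`, but `1 / σ(m) ≠ 0`.
  have integrable_m : IntegrableOn (fun t : ℝ => (m : ℝ) ^ (-(2 * t))) (Set.Ici 0) μ :=
    .of_integral_ne_zero
      (h_m ▸ one_div_ne_zero (Nat.cast_ne_zero.mpr (sigma_n_pos.trans hσ).ne'))
  have exponent_nonpos : ∀ᵐ t ∂μ.restrict (Set.Ici 0), -(2 * t) ≤ (0 : ℝ) :=
    ae_restrict_of_forall_mem measurableSet_Ici fun t (ht : 0 ≤ t) => by linarith
  rw [h_m, h_n] at weight_lt
  exact weight_lt.not_ge <| integral_rpow_le_integral_rpow_of_exponent_nonpos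
    (mod_cast m_pos) (mod_cast hmn) exponent_nonpos integrable_m

/-- There is no positive Borel measure `μ` on `[0,∞)` such that
`1/σ(n) = ∫_0^∞ n^{-2t} dμ(t)` for every positive integer `n`, where `σ(n)` is the
sum of the positive divisors of `n`. -/
theorem stmt_6 :
    ¬ ∃ μ : Measure ℝ,
      ∀ n : ℕ, 1 ≤ n →
        (1 : ℝ) / ((∑ d ∈ n.divisors, d : ℕ) : ℝ) =
          ∫ t in Set.Ici (0 : ℝ), (n : ℝ) ^ (-(2 * t)) ∂μ := by
  rintro ⟨μ, h⟩
  exact stmt_6_general (m := 4) (n := 5) (by norm_num) (by decide)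
    ⟨μ, h 4 (by norm_num), h 5 (by norm_num)⟩
end

section
/- Let w : ℕ≥1 → ℝ be a sequence of positive real numbers with w_1 = 1 that is multiplicative (w_{mn} = w_m·w_n whenever m and n are coprime) and satisfies w_{p^k} ≤ w_{p^{k-1}} for every prime p and every integer k ≥ 1. Suppose σ_0 > 0 is such that ∑_{n=1}^∞ w_n^{-1} n^{-2σ} < ∞ for every σ > σ_0, and set m = max(1, σ_0). Then for every finite list of complex points z_1, ..., z_k with Re(z_i) > m for each i, the k×k complex matrix A with entries A_{ij} = (∑_{n=1}^∞ w_n^{-1} n^{-(z_i + conj(z_j))}) / (∑_{n=1}^∞ n^{-(z_i + conj(z_j))}) is positive semidefinite. -/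
open scoped ComplexConjugate ComplexOrder

/-!
Let `f n = (w n)⁻¹` and let `g = μ * f` be its Möbius transform, so that the Dirichlet series of `f`
divided by `ζ` is the Dirichlet series of `g`. The function `g` is multiplicative, and at prime
powers it is the increment `f (p ^ (k + 1)) - f (p ^ k) ≥ 0`; hence `g ≥ 0` everywhere. Each kernel
`g n * n ^ (-(s + conj t)) = g n * n ^ (-s) * conj (n ^ (-t))` is then positive semidefinite, and so
is their sum. Moreover `f n = ∑ d ∣ n, g d ≥ g 1 = 1`, so the Dirichlet series of `f` can only
converge absolutely where that of `ζ` does.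
-/

section PosSemidef

variable {ι R : Type*} [Ring R] [PartialOrder R] [StarRing R]

-- `Matrix.posSemidef_vecMulVec_self_star` without finiteness of the index type.
theorem posSemidef_of_mul_star [StarOrderedRing R] (v : ι → R) :
    (Matrix.of fun i j => v i * star (v j)).PosSemidef := by
  refine ⟨Matrix.IsHermitian.ext fun i j => by simp, fun x => ?_⟩
  have hsquare : (x.sum fun i xi => x.sum fun j xj => star xi * (v i * star (v j)) * xj) =
      star (x.sum fun i xi => star (v i) * xi) * x.sum fun i xi => star (v i) * xi := by
    simp only [Finsupp.sum, star_sum, star_mul, star_star, Finset.sum_mul_sum, mul_assoc]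
  exact hsquare ▸ star_mul_self_nonneg _

theorem posSemidef_of_hasSum [IsOrderedAddMonoid R] [TopologicalSpace R] [IsTopologicalSemiring R]
    [ContinuousStar R] [OrderClosedTopology R] {α : Type*} {M : α → Matrix ι ι R}
    {A : Matrix ι ι R} (hM : ∀ a, (M a).PosSemidef)
    (hA : ∀ i j, HasSum (fun a => M a i j) (A i j)) : A.PosSemidef := by
  refine ⟨Matrix.IsHermitian.ext fun i j => ?_, fun x => ?_⟩
  · refine (hA j i).star.unique ?_
    simpa only [(hM _).1.apply] using hA i j
  · have hform : HasSum (fun a => x.sum fun i xi => x.sum fun j xj => star xi * M a i j * xj)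
        (x.sum fun i xi => x.sum fun j xj => star xi * A i j * xj) :=
      hasSum_sum fun i _ => hasSum_sum fun j _ => ((hA i j).mul_left _).mul_right _
    exact hform.nonneg fun a => (hM a).2 x

end PosSemidef

section ArithmeticFunction

open ArithmeticFunction
open scoped ArithmeticFunction.Moebius

theorem isMultiplicative_toArithmeticFunction {R : Type*} [MonoidWithZero R] {f : ℕ → R}
    (hone : f 1 = 1)
    (hmul : ∀ {m n : ℕ}, m ≠ 0 → n ≠ 0 → m.Coprime n → f (m * n) = f m * f n) :
    (toArithmeticFunction f).IsMultiplicative := by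
  refine IsMultiplicative.iff_ne_zero.2 ⟨by simpa [toArithmeticFunction] using hone, ?_⟩
  intro m n hm hn hmn
  simpa [toArithmeticFunction, hm, hn] using hmul hm hn hmn

theorem nonneg_of_isMultiplicative {R : Type*} [CommSemiring R] [PartialOrder R] [IsOrderedRing R]
    {f : ArithmeticFunction R} (hf : f.IsMultiplicative)
    (hpow : ∀ p k : ℕ, p.Prime → 0 ≤ f (p ^ k)) (n : ℕ) : 0 ≤ f n := by
  rcases eq_or_ne n 0 with rfl | hn
  · exact f.map_zero.ge
  · rw [hf.multiplicative_factorization _ hn]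
    exact Finset.prod_nonneg fun p hp => hpow p _ (Nat.prime_of_mem_primeFactors hp)

theorem sum_divisors_moebius_mul {R : Type*} [Ring R] (f : ArithmeticFunction R) (n : ℕ) :
    ∑ d ∈ n.divisors, ((μ : ArithmeticFunction R) * f) d = f n := by
  rw [← coe_zeta_mul_apply, ← mul_assoc, coe_zeta_mul_coe_moebius, one_mul]

theorem moebius_mul_apply_prime_pow_succ {R : Type*} [Ring R] (f : ArithmeticFunction R) {p : ℕ}
    (hp : p.Prime) (k : ℕ) :
    ((μ : ArithmeticFunction R) * f) (p ^ (k + 1)) = f (p ^ (k + 1)) - f (p ^ k) := by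
  rw [← sum_divisors_moebius_mul f (p ^ (k + 1)), ← sum_divisors_moebius_mul f (p ^ k),
    Nat.sum_divisors_prime_pow hp, Nat.sum_divisors_prime_pow hp, Finset.sum_range_succ _ (k + 1),
    add_sub_cancel_left]

variable {R : Type*} [CommRing R] {f : ArithmeticFunction R}

theorem isMultiplicative_moebius_mul (hf : f.IsMultiplicative) :
    ((μ : ArithmeticFunction R) * f).IsMultiplicative :=
  isMultiplicative_moebius.intCast.mul hf

variable [PartialOrder R] [IsOrderedRing R]

theorem moebius_mul_nonneg (hf : f.IsMultiplicative)
    (hmono : ∀ p : ℕ, p.Prime → Monotone fun k => f (p ^ k)) (n : ℕ) :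
    0 ≤ ((μ : ArithmeticFunction R) * f) n := by
  have hg := isMultiplicative_moebius_mul hf
  refine nonneg_of_isMultiplicative hg (fun p k hp => ?_) n
  cases k with
  | zero => rw [pow_zero, hg.map_one]; exact zero_le_one
  | succ k =>
    rw [moebius_mul_apply_prime_pow_succ f hp]
    exact sub_nonneg.2 (hmono p hp k.le_succ)

theorem one_le_of_monotone_prime_pow (hf : f.IsMultiplicative)
    (hmono : ∀ p : ℕ, p.Prime → Monotone fun k => f (p ^ k)) {n : ℕ} (hn : n ≠ 0) : 1 ≤ f n :=
  calc
    1 = ((μ : ArithmeticFunction R) * f) 1 := (isMultiplicative_moebius_mul hf).map_one.symm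
    _ ≤ ∑ d ∈ n.divisors, ((μ : ArithmeticFunction R) * f) d :=
      Finset.single_le_sum (fun d _ => moebius_mul_nonneg hf hmono d) (Nat.one_mem_divisors.2 hn)
    _ = f n := sum_divisors_moebius_mul f n

end ArithmeticFunction

section LSeries

open scoped ArithmeticFunction.Moebius

theorem LSeries_term_add_one (f : ℕ → ℂ) (s : ℂ) (n : ℕ) :
    LSeries.term f s (n + 1) = f (n + 1) * ((n + 1 : ℕ) : ℂ) ^ (-s) := by
  rw [LSeries.term_of_ne_zero n.succ_ne_zero, Complex.cpow_neg, div_eq_mul_inv]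

theorem LSeries_eq_tsum_add_one (f : ℕ → ℂ) (s : ℂ) :
    LSeries f s = ∑' n : ℕ, f (n + 1) * ((n + 1 : ℕ) : ℂ) ^ (-s) := by
  have hsupport : Function.support (LSeries.term f s) ⊆ Set.range Nat.succ := by
    rintro (_ | n) hn
    · exact absurd (LSeries.term_zero f s) hn
    · exact ⟨n, rfl⟩
  rw [LSeries, ← Nat.succ_injective.tsum_eq hsupport]
  exact tsum_congr (LSeries_term_add_one f s)

theorem LSeriesSummable_iff_summable_norm_mul_rpow {f : ℕ → ℂ} {s : ℂ} :
    LSeriesSummable f s ↔ Summable fun n : ℕ => ‖f (n + 1)‖ * ((n + 1 : ℕ) : ℝ) ^ (-s.re) := by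
  rw [LSeriesSummable, ← summable_nat_add_iff 1, ← summable_norm_iff]
  refine summable_congr fun n => ?_
  rw [LSeries_term_add_one, norm_mul, Complex.norm_natCast_cpow_of_pos n.succ_pos, Complex.neg_re]

theorem one_lt_re_of_LSeriesSummable {f : ℕ → ℂ} {s : ℂ} (hf : ∀ n ≠ 0, 1 ≤ ‖f n‖)
    (hs : LSeriesSummable f s) : 1 < s.re := by
  rw [← LSeriesSummable_one_iff]
  refine hs.norm.of_norm_bounded fun n => ?_
  rcases eq_or_ne n 0 with rfl | hn
  · simp only [LSeries.term_zero, norm_zero, le_refl]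
  · exact LSeries.norm_term_le s (by simpa using hf n hn)

theorem LSeriesSummable_add_conj {f : ℕ → ℂ} {s t : ℂ} (hs : LSeriesSummable f (s + conj s))
    (ht : LSeriesSummable f (t + conj t)) : LSeriesSummable f (s + conj t) := by
  rcases le_total s.re t.re with hst | hts
  · exact hs.of_re_le_re (by simpa using hst)
  · exact ht.of_re_le_re (by simpa using hts)

theorem LSeriesSummable_coe_moebius {s : ℂ} (hs : 1 < s.re) :
    LSeriesSummable ⇑(μ : ArithmeticFunction ℂ) s :=
  ArithmeticFunction.LSeriesSummable_moebius_iff.2 hs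

theorem LSeriesSummable_moebius_mul {f : ArithmeticFunction ℂ} {s : ℂ} (hs : 1 < s.re)
    (hf : LSeriesSummable f s) : LSeriesSummable ⇑((μ : ArithmeticFunction ℂ) * f) s :=
  ArithmeticFunction.LSeriesSummable_mul (LSeriesSummable_coe_moebius hs) hf

theorem LSeries_moebius_mul {f : ArithmeticFunction ℂ} {s : ℂ} (hs : 1 < s.re)
    (hf : LSeriesSummable f s) :
    LSeries ⇑((μ : ArithmeticFunction ℂ) * f) s = LSeries f s / LSeries 1 s := by
  have hinv : LSeries 1 s * LSeries ⇑(μ : ArithmeticFunction ℂ) s = 1 :=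
    LSeries_one_mul_Lseries_moebius hs
  rw [eq_div_iff (LSeries_one_ne_zero_of_one_lt_re hs), mul_comm,
    ArithmeticFunction.LSeries_mul' (LSeriesSummable_coe_moebius hs) hf, ← mul_assoc, hinv, one_mul]

theorem LSeries_term_add_conj (g : ℕ → ℂ) (s t : ℂ) {n : ℕ} (hn : n ≠ 0) :
    LSeries.term g (s + conj t) n = g n * ((n : ℂ) ^ (-s) * conj ((n : ℂ) ^ (-t))) := by
  have harg : (n : ℂ).arg ≠ Real.pi := by simp [Complex.natCast_arg, Real.pi_ne_zero.symm]
  have hconj : conj ((n : ℂ) ^ (-t)) = (n : ℂ) ^ (-conj t) := by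
    rw [← map_neg, Complex.cpow_conj _ _ harg, Complex.conj_natCast]
  rw [LSeries.term_of_ne_zero hn, hconj, ← Complex.cpow_add _ _ (Nat.cast_ne_zero.2 hn), ← neg_add,
    Complex.cpow_neg, div_eq_mul_inv]

variable {ι : Type*} {z : ι → ℂ}

theorem posSemidef_LSeries_of_nonneg {g : ℕ → ℂ} (hg : ∀ n, 0 ≤ g n)
    (hs : ∀ i, LSeriesSummable g (z i + conj (z i))) :
    (Matrix.of fun i j => LSeries g (z i + conj (z j))).PosSemidef := by
  let M (n : ℕ) : Matrix ι ι ℂ := Matrix.of fun i j => LSeries.term g (z i + conj (z j)) n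
  refine posSemidef_of_hasSum (M := M) (fun n => ?_) fun i j =>
    (LSeriesSummable_add_conj (hs i) (hs j)).hasSum
  rcases eq_or_ne n 0 with rfl | hn
  · simpa only [M, LSeries.term_zero] using! Matrix.PosSemidef.zero
  · simp only [M, LSeries_term_add_conj g _ _ hn]
    exact (posSemidef_of_mul_star fun i => (n : ℂ) ^ (-z i)).smul (hg n)

theorem posSemidef_LSeries_div_LSeries_one {f : ArithmeticFunction ℂ} (hf : f.IsMultiplicative)
    (hmono : ∀ p : ℕ, p.Prime → Monotone fun k => f (p ^ k))
    (hs : ∀ i, LSeriesSummable f (z i + conj (z i))) :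
    (Matrix.of fun i j =>
      LSeries f (z i + conj (z j)) / LSeries 1 (z i + conj (z j))).PosSemidef := by
  have hsij (i j) : LSeriesSummable f (z i + conj (z j)) := LSeriesSummable_add_conj (hs i) (hs j)
  have hnorm (n : ℕ) (hn : n ≠ 0) : 1 ≤ ‖f n‖ :=
    (Complex.le_def.1 (one_le_of_monotone_prime_pow hf hmono hn)).1.trans (Complex.re_le_norm _)
  have hre (i j) : 1 < (z i + conj (z j)).re := one_lt_re_of_LSeriesSummable hnorm (hsij i j)
  simp only [← LSeries_moebius_mul (hre _ _) (hsij _ _)]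
  exact posSemidef_LSeries_of_nonneg (moebius_mul_nonneg hf hmono) fun i =>
    LSeriesSummable_moebius_mul (hre i i) (hs i)

end LSeries

theorem stmt_10_general (w : ℕ → ℝ) (hwpos : ∀ n : ℕ, 1 ≤ n → 0 < w n) (hw1 : w 1 = 1)
    (hmult : ∀ m n : ℕ, 1 ≤ m → 1 ≤ n → Nat.Coprime m n → w (m * n) = w m * w n)
    (hdec : ∀ p k : ℕ, p.Prime → 1 ≤ k → w (p ^ k) ≤ w (p ^ (k - 1)))
    {ι : Type*} (z : ι → ℂ)
    (hsum : ∀ i, Summable fun n : ℕ => (w (n + 1))⁻¹ * ((n + 1 : ℕ) : ℝ) ^ (-(2 * (z i).re))) :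
    Matrix.PosSemidef (Matrix.of fun i j : ι =>
      (∑' n : ℕ, ((w (n + 1) : ℝ) : ℂ)⁻¹ * ((n + 1 : ℕ) : ℂ) ^ (-(z i + conj (z j)))) /
        (∑' n : ℕ, ((n + 1 : ℕ) : ℂ) ^ (-(z i + conj (z j))))) := by
  let f : ArithmeticFunction ℂ := toArithmeticFunction fun n => ((w n : ℝ) : ℂ)⁻¹
  have hf {n : ℕ} (hn : n ≠ 0) : f n = ((w n : ℝ) : ℂ)⁻¹ := if_neg hn
  have hfmult : f.IsMultiplicative := by
    refine isMultiplicative_toArithmeticFunction (by simp [hw1]) fun {m n} hm hn hmn => ?_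
    rw [hmult m n (Nat.pos_of_ne_zero hm) (Nat.pos_of_ne_zero hn) hmn, Complex.ofReal_mul, mul_inv]
  have hfmono (p : ℕ) (hp : p.Prime) : Monotone fun k => f (p ^ k) := by
    refine monotone_nat_of_le_succ fun k => ?_
    rw [hf (pow_ne_zero _ hp.ne_zero), hf (pow_ne_zero _ hp.ne_zero)]
    exact_mod_cast inv_anti₀ (hwpos _ (pow_pos hp.pos _)) (hdec p (k + 1) hp le_add_self)
  have hfsum (i : ι) : LSeriesSummable f (z i + conj (z i)) := by
    refine LSeriesSummable_iff_summable_norm_mul_rpow.2 ((hsum i).congr fun n => ?_)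
    rw [hf n.succ_ne_zero, norm_inv, Complex.norm_of_nonneg (hwpos _ le_add_self).le,
      Complex.add_re, Complex.conj_re, two_mul]
  simpa only [LSeries_eq_tsum_add_one, hf (Nat.succ_ne_zero _), Pi.one_apply, one_mul] using
    posSemidef_LSeries_div_LSeries_one hfmult hfmono hfsum

/-- If the positive weights `w_n` (with `w_1 = 1`) are multiplicative with
`w_{p^k}` decreasing in `k` for each prime `p`, and `∑ w_n⁻¹ n^{-2σ} < ∞` for every
`σ > σ_0 > 0`, then for `m = max 1 σ_0` and any points `z_1,…,z_k` with `Re z_i > m`,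
the matrix `A_{ij} = (∑_{n≥1} w_n⁻¹ n^{-(z_i + conj z_j)}) / (∑_{n≥1} n^{-(z_i + conj z_j)})`
is positive semidefinite. -/
theorem stmt_10 (w : ℕ → ℝ) (hwpos : ∀ n : ℕ, 1 ≤ n → 0 < w n) (hw1 : w 1 = 1)
    (hmult : ∀ m n : ℕ, 1 ≤ m → 1 ≤ n → Nat.Coprime m n → w (m * n) = w m * w n)
    (hdec : ∀ p k : ℕ, p.Prime → 1 ≤ k → w (p ^ k) ≤ w (p ^ (k - 1)))
    (σ₀ : ℝ) (hσ₀ : 0 < σ₀)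
    (hsum : ∀ σ : ℝ, σ₀ < σ →
      Summable (fun n : ℕ => (w (n + 1))⁻¹ * ((n + 1 : ℕ) : ℝ) ^ (-(2 * σ))))
    (k : ℕ) (z : Fin k → ℂ) (hz : ∀ i, max 1 σ₀ < (z i).re) :
    Matrix.PosSemidef (Matrix.of fun i j : Fin k =>
      (∑' n : ℕ, ((w (n + 1) : ℝ) : ℂ)⁻¹ * ((n + 1 : ℕ) : ℂ) ^ (-(z i + conj (z j)))) /
        (∑' n : ℕ, ((n + 1 : ℕ) : ℂ) ^ (-(z i + conj (z j))))) := by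
  exact stmt_10_general w hwpos hw1 hmult hdec z fun i =>
    hsum _ ((le_max_right 1 σ₀).trans_lt (hz i))
end

section
/- Let a : ℕ≥1 → ℂ, let 0 ≤ Δ ≤ Δ' and B ≥ 0. Suppose (i) ∑_{n=1}^∞ |a_n| n^{-σ'} < ∞ for every σ' > Δ'; and (ii) for every natural number N ≥ 1 and every complex s with Re(s) > Δ, the family (a_n n^{-s})_{n ∈ ⟨P_N⟩} is absolutely summable and |∑_{n ∈ ⟨P_N⟩} a_n n^{-s}| ≤ B. Then for every complex s with Re(s) > Δ, the partial sums ∑_{n=1}^{M} a_n n^{-s} converge as M → ∞ to a limit L(s) satisfying |L(s)| ≤ B. -/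
open Filter

/-!
Fix a vertical line `Re s = σ` with `σ > Δ`. For an integrable kernel `K`, averaging a projection
against `K` in the `Im s` direction multiplies its `n`-th term by `𝓕⁻ K (log n)`, so that the
resulting sum is bounded by `B ‖K‖₁`, uniformly in `N`; once `N > M`, the projection contains every
`n ≤ M`. Two kernels, whose inverse Fourier transforms are trapezoids, suffice.

* A trapezoid equal to `1` up to `log M` and vanishing from `log (M + 1)` on cuts out the partial
  sum up to `M`. The `L¹` norm of its kernel is `O(M ^ r)` for every `r > 0`, hence so are the
  partial sums, and Abel summation gives convergence to the right of the line.
* A triangle vanishing from `log (M + 1)` on yields logarithmic Riesz means. Its (Fejér) kernel has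
  `L¹` norm exactly `1`, so that these means, and with them their limit, are bounded by `B`.
-/

section Multiplier

open MeasureTheory FourierTransform

variable {ι V : Type*} [Countable ι] [NormedAddCommGroup V] [InnerProductSpace ℝ V]
  [FiniteDimensional ℝ V] [MeasurableSpace V] [BorelSpace V]

lemma norm_tsum_mul_fourierInv_le {c : ι → ℂ} {x : ι → V} {B : ℝ} (hc : Summable fun i => ‖c i‖)
    (hB : ∀ ξ : V, ‖∑' i, c i * Real.fourierChar (inner ℝ ξ (x i))‖ ≤ B) {K : V → ℂ}
    (hK : Integrable K) :
    ‖∑' i, c i * 𝓕⁻ K (x i)‖ ≤ B * ∫ ξ, ‖K ξ‖ := by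
  have hterm (i : ι) : Integrable fun ξ => c i * (Real.fourierChar (inner ℝ ξ (x i)) * K ξ) := by
    have hcont : Continuous fun ξ => (Real.fourierChar (inner ℝ ξ (x i)) : ℂ) := by fun_prop
    refine (hK.bdd_mul (c := 1) hcont.aestronglyMeasurable (.of_forall fun ξ => ?_)).const_mul _
    exact (Circle.norm_coe _).le
  have hswap : ∑' i, c i * 𝓕⁻ K (x i) =
      ∫ ξ, (∑' i, c i * Real.fourierChar (inner ℝ ξ (x i))) * K ξ := by
    have hnorm : Summable fun i =>
        ∫ ξ, ‖c i * (Real.fourierChar (inner ℝ ξ (x i)) * K ξ)‖ := by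
      simpa only [norm_mul, Circle.norm_coe, one_mul, integral_const_mul]
        using hc.mul_right (∫ ξ, ‖K ξ‖)
    simp only [Real.fourierInv_eq, Circle.smul_def, smul_eq_mul, ← integral_const_mul]
    rw [integral_tsum_of_summable_integral_norm hterm hnorm]
    simp only [← mul_assoc, tsum_mul_right]
  rw [hswap, ← integral_const_mul]
  refine norm_integral_le_of_norm_le (hK.norm.const_mul B) (.of_forall fun ξ => ?_)
  rw [norm_mul]
  gcongr
  exact hB ξ

end Multiplier

section Trapezoid

open MeasureTheory FourierTransform Real Convolution

/-- The even trapezoidal function that is `1` on `[-r, r]`, `0` outside `[-R, R]` and affine in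
between; for `r = 0` it is a triangle. It is a cut-off whose Fourier transform is integrable, and is
meant for `0 ≤ r < R`. -/
noncomputable def trapezoid (r R x : ℝ) : ℝ := max 0 (min 1 ((R - |x|) / (R - r)))

variable {r R : ℝ}

lemma trapezoid_eq_one (hrR : r < R) {x : ℝ} (hx : |x| ≤ r) : trapezoid r R x = 1 := by
  have : 1 ≤ (R - |x|) / (R - r) := by rw [one_le_div (by linarith)]; linarith
  simp [trapezoid, this]

lemma trapezoid_eq_zero (hrR : r ≤ R) {x : ℝ} (hx : R ≤ |x|) : trapezoid r R x = 0 :=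
  max_eq_left <| (min_le_right _ _).trans <|
    div_nonpos_of_nonpos_of_nonneg (by linarith) (by linarith)

lemma trapezoid_eq_div (hrR : r < R) {x : ℝ} (hrx : r ≤ |x|) (hxR : |x| ≤ R) :
    trapezoid r R x = (R - |x|) / (R - r) := by
  rw [trapezoid, min_eq_right, max_eq_right]
  · exact div_nonneg (by linarith) (by linarith)
  · rw [div_le_one (by linarith)]
    linarith

lemma continuous_trapezoid (r R : ℝ) : Continuous (trapezoid r R) := by
  unfold trapezoid
  fun_prop

lemma integrable_trapezoid (hrR : r ≤ R) : Integrable fun x => (trapezoid r R x : ℂ) := by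
  have hcont : Continuous fun x => (trapezoid r R x : ℂ) :=
    Complex.continuous_ofReal.comp (continuous_trapezoid r R)
  refine hcont.integrable_of_hasCompactSupport <|
    .intro (isCompact_Icc (a := -R) (b := R)) fun x hx => ?_
  rw [Set.mem_Icc, ← abs_le, not_le] at hx
  rw [trapezoid_eq_zero hrR hx.le, Complex.ofReal_zero]

lemma fourier_indicator_Icc_neg_self {a : ℝ} (ha : 0 ≤ a) (ξ : ℝ) :
    𝓕 ((Set.Icc (-a) a).indicator (1 : ℝ → ℂ)) ξ = (2 * a * sinc (2 * π * a * ξ) : ℝ) := by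
  have hinterval : 𝓕 ((Set.Icc (-a) a).indicator (1 : ℝ → ℂ)) ξ =
      ∫ x in -a..a, Complex.exp ((-2 * π * ξ) * x * Complex.I) := by
    rw [fourier_real_eq_integral_exp_smul, intervalIntegral.integral_of_le (by linarith),
      ← integral_Icc_eq_integral_Ioc, ← integral_indicator measurableSet_Icc]
    congr 1 with x
    by_cases hx : x ∈ Set.Icc (-a) a
    · simp [hx, mul_right_comm]
    · simp [hx]
  rcases eq_or_ne ξ 0 with rfl | hξ
  · rw [hinterval]
    simp [two_mul]
  have hne : -2 * π * ξ ≠ 0 := by simp [hξ, pi_ne_zero]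
  have hscale := intervalIntegral.integral_comp_mul_left (a := -a) (b := a)
    (fun x : ℝ => Complex.exp (x * Complex.I)) hne
  rw [mul_neg, integral_exp_mul_I_eq_sinc] at hscale
  have hsinc : sinc (-2 * π * ξ * a) = sinc (2 * π * a * ξ) := by
    rw [← sinc_neg]
    ring_nf
  simp only [Complex.ofReal_mul, Complex.ofReal_neg, Complex.ofReal_ofNat] at hscale
  rw [hinterval, hscale, hsinc, Complex.real_smul]
  push_cast
  have : (ξ : ℂ) ≠ 0 := Complex.ofReal_ne_zero.mpr hξ
  have : (π : ℂ) ≠ 0 := Complex.ofReal_ne_zero.mpr pi_ne_zero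
  field_simp

lemma convolution_indicator_Icc_neg_self (hr : 0 ≤ r) (hrR : r < R) (x : ℝ) :
    ((Set.Icc (-((R + r) / 2)) ((R + r) / 2)).indicator (1 : ℝ → ℂ)
      ⋆[ContinuousLinearMap.mul ℂ ℂ]
      (Set.Icc (-((R - r) / 2)) ((R - r) / 2)).indicator (1 : ℝ → ℂ)) x =
      ((R - r) * trapezoid r R x : ℝ) := by
  have hprod (t : ℝ) : (Set.Icc (-((R + r) / 2)) ((R + r) / 2)).indicator (1 : ℝ → ℂ) t *
      (Set.Icc (-((R - r) / 2)) ((R - r) / 2)).indicator (1 : ℝ → ℂ) (x - t) =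
      (Set.Icc (max (-((R + r) / 2)) (x - (R - r) / 2))
        (min ((R + r) / 2) (x + (R - r) / 2))).indicator (1 : ℝ → ℂ) t := by
    simp only [Set.indicator_apply, Set.mem_Icc, max_le_iff, le_min_iff, Pi.one_apply]
    grind
  simp only [convolution, ContinuousLinearMap.mul_apply', hprod]
  rw [integral_indicator measurableSet_Icc]
  have hlength : max (min ((R + r) / 2) (x + (R - r) / 2) -
      max (-((R + r) / 2)) (x - (R - r) / 2)) 0 = (R - r) * trapezoid r R x := by
    have hpos : 0 < R - r := by linarith
    rw [trapezoid, mul_max_of_nonneg _ _ hpos.le, mul_min_of_nonneg _ _ hpos.le,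
      mul_div_cancel₀ _ hpos.ne', mul_zero, mul_one]
    grind
  simp only [Pi.one_apply, setIntegral_const, Real.volume_real_Icc, hlength, Complex.real_smul,
    mul_one]

lemma fourier_trapezoid (hr : 0 ≤ r) (hrR : r < R) (ξ : ℝ) :
    𝓕 (fun x => (trapezoid r R x : ℂ)) ξ =
      ((R + r) * sinc (π * (R + r) * ξ) * sinc (π * (R - r) * ξ) : ℝ) := by
  have hind (a : ℝ) : Integrable ((Set.Icc (-a) a).indicator (1 : ℝ → ℂ)) :=
    (integrable_indicator_iff measurableSet_Icc).mpr <| integrableOn_const (by simp)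
  have hconv := Real.fourier_mul_convolution_eq (hind ((R + r) / 2)) (hind ((R - r) / 2)) ξ
  have hsmul : 𝓕 (fun x => (((R - r) * trapezoid r R x : ℝ) : ℂ)) ξ =
      (R - r : ℝ) * 𝓕 (fun x => (trapezoid r R x : ℂ)) ξ := by
    simp only [fourier_eq, ← integral_const_mul, Complex.ofReal_mul, mul_smul_comm]
  rw [funext (convolution_indicator_Icc_neg_self hr hrR), hsmul,
    fourier_indicator_Icc_neg_self (by linarith), fourier_indicator_Icc_neg_self (by linarith)]
    at hconv
  refine mul_left_cancel₀ (Complex.ofReal_ne_zero.mpr (sub_pos.mpr hrR).ne') (hconv.trans ?_)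
  rw [← Complex.ofReal_mul, ← Complex.ofReal_mul]
  congr 1
  rw [show 2 * π * ((R + r) / 2) * ξ = π * (R + r) * ξ by ring,
    show 2 * π * ((R - r) / 2) * ξ = π * (R - r) * ξ by ring]
  ring

lemma abs_sinc_mul_le {a : ℝ} (ha : 0 < a) (ξ : ℝ) :
    |sinc (a * ξ)| ≤ 2 * (1 + a⁻¹) * (1 + |ξ|)⁻¹ := by
  have hsinc (u : ℝ) : |sinc u| * (1 + |u|) ≤ 2 := by
    rcases eq_or_ne u 0 with rfl | hu
    · simp
    · have hmul : |sinc u| * |u| = |sin u| := by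
        rw [← abs_mul, sinc_of_ne_zero hu, div_mul_cancel₀ _ hu]
      linarith [abs_sinc_le_one u, abs_sin_le_one u]
  have hcomp : 1 + |ξ| ≤ (1 + a⁻¹) * (1 + |a * ξ|) := by
    rw [abs_mul, abs_of_pos ha]
    have : (1 + a⁻¹) * (1 + a * |ξ|) = (1 + |ξ|) + (a * |ξ| + a⁻¹) := by field_simp; ring
    rw [this]
    linarith [show 0 ≤ a * |ξ| + a⁻¹ by positivity]
  rw [← div_eq_mul_inv, le_div_iff₀ (by positivity)]
  calc |sinc (a * ξ)| * (1 + |ξ|) ≤ |sinc (a * ξ)| * ((1 + a⁻¹) * (1 + |a * ξ|)) := by gcongr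
    _ = |sinc (a * ξ)| * (1 + |a * ξ|) * (1 + a⁻¹) := by ring
    _ ≤ 2 * (1 + a⁻¹) := by gcongr; exact hsinc _

lemma norm_fourier_trapezoid_le (hr : 0 ≤ r) (hrR : r < R) {ε : ℝ} (hε : 0 ≤ ε) (hε1 : ε ≤ 1)
    (ξ : ℝ) :
    ‖𝓕 (fun x => (trapezoid r R x : ℂ)) ξ‖ ≤
      2 * (1 + (R + r)) * (2 * (1 + (R - r)⁻¹)) ^ ε * (1 + ‖ξ‖) ^ (-(1 + ε)) := by
  have hadd : 0 < R + r := by linarith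
  have : 0 < R - r := by linarith
  have hwide : (R + r) * |sinc (π * (R + r) * ξ)| ≤ 2 * (1 + (R + r)) * (1 + |ξ|)⁻¹ := by
    calc (R + r) * |sinc (π * (R + r) * ξ)|
        ≤ (R + r) * (2 * (1 + (π * (R + r))⁻¹) * (1 + |ξ|)⁻¹) := by
          gcongr
          exact abs_sinc_mul_le (by positivity) ξ
      _ = 2 * (π⁻¹ + (R + r)) * (1 + |ξ|)⁻¹ := by field_simp; ring
      _ ≤ 2 * (1 + (R + r)) * (1 + |ξ|)⁻¹ := by
          gcongr
          exact inv_le_one_of_one_le₀ (by linarith [pi_gt_three])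
  have hnarrow : |sinc (π * (R - r) * ξ)| ≤ (2 * (1 + (R - r)⁻¹)) ^ ε * (1 + |ξ|) ^ (-ε) := by
    calc |sinc (π * (R - r) * ξ)| ≤ |sinc (π * (R - r) * ξ)| ^ ε :=
          self_le_rpow_of_le_one (abs_nonneg _) (abs_sinc_le_one _) hε1
      _ ≤ (2 * (1 + (R - r)⁻¹) * (1 + |ξ|)⁻¹) ^ ε := by
          gcongr
          refine (abs_sinc_mul_le (by positivity) ξ).trans ?_
          gcongr
          nlinarith [pi_gt_three]
      _ = (2 * (1 + (R - r)⁻¹)) ^ ε * (1 + |ξ|) ^ (-ε) := by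
          rw [mul_rpow (by positivity) (by positivity), inv_rpow (by positivity),
            rpow_neg (by positivity)]
  rw [fourier_trapezoid hr hrR, Complex.norm_real, norm_mul, norm_mul, norm_of_nonneg hadd.le,
    neg_add, rpow_add (by positivity), rpow_neg_one]
  simp only [norm_eq_abs]
  calc (R + r) * |sinc (π * (R + r) * ξ)| * |sinc (π * (R - r) * ξ)|
      ≤ 2 * (1 + (R + r)) * (1 + |ξ|)⁻¹ * ((2 * (1 + (R - r)⁻¹)) ^ ε * (1 + |ξ|) ^ (-ε)) := by
        gcongr
    _ = _ := by ring

lemma integrable_fourier_trapezoid (hr : 0 ≤ r) (hrR : r < R) :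
    Integrable (𝓕 fun x => (trapezoid r R x : ℂ)) := by
  have hmeas : AEStronglyMeasurable (𝓕 fun x => (trapezoid r R x : ℂ)) := by
    rw [funext (fourier_trapezoid hr hrR)]
    fun_prop
  have hdecay : Integrable fun ξ : ℝ => (1 + ‖ξ‖) ^ (-(1 + 1) : ℝ) :=
    integrable_one_add_norm (by simp)
  exact (hdecay.const_mul _).mono' hmeas <| .of_forall
    (norm_fourier_trapezoid_le hr hrR zero_le_one le_rfl)

lemma integral_norm_fourier_trapezoid_le (hr : 0 ≤ r) (hrR : r < R) {ε : ℝ} (hε : 0 < ε)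
    (hε1 : ε ≤ 1) :
    ∫ ξ, ‖𝓕 (fun x => (trapezoid r R x : ℂ)) ξ‖ ≤
      2 * (1 + (R + r)) * (2 * (1 + (R - r)⁻¹)) ^ ε * ∫ ξ : ℝ, (1 + ‖ξ‖) ^ (-(1 + ε)) := by
  have hdecay : Integrable fun ξ : ℝ => (1 + ‖ξ‖) ^ (-(1 + ε)) :=
    integrable_one_add_norm (by simpa using hε)
  rw [← integral_const_mul]
  exact integral_mono (integrable_fourier_trapezoid hr hrR).norm (hdecay.const_mul _)
    (norm_fourier_trapezoid_le hr hrR hε.le hε1)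

lemma fourierInv_fourier_trapezoid (hr : 0 ≤ r) (hrR : r < R) :
    𝓕⁻ (𝓕 fun x => (trapezoid r R x : ℂ)) = fun x => (trapezoid r R x : ℂ) :=
  (Complex.continuous_ofReal.comp (continuous_trapezoid r R)).fourierInv_fourier_eq
    (integrable_trapezoid hrR.le) (integrable_fourier_trapezoid hr hrR)

lemma integral_norm_fourier_trapezoid_zero (hR : 0 < R) :
    ∫ ξ, ‖𝓕 (fun x => (trapezoid 0 R x : ℂ)) ξ‖ = 1 := by
  have hnonneg (ξ : ℝ) : (‖𝓕 (fun x => (trapezoid 0 R x : ℂ)) ξ‖ : ℂ) =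
      𝓕 (fun x => (trapezoid 0 R x : ℂ)) ξ := by
    rw [fourier_trapezoid le_rfl hR, Complex.norm_real, norm_of_nonneg]
    rw [add_zero, sub_zero, mul_assoc]
    exact mul_nonneg hR.le (mul_self_nonneg _)
  have hzero := congrFun (fourierInv_fourier_trapezoid le_rfl hR) 0
  rw [fourierInv_eq] at hzero
  rw [← Complex.ofReal_inj, ← integral_complex_ofReal]
  simpa [hnonneg, trapezoid_eq_one hR] using hzero

end Trapezoid

section AbelSummation

open Asymptotics Complex MeasureTheory Topology

lemma exists_tendsto_sum_Icc_zero_mul_cpow {f : ℕ → ℂ} (hf : f 0 = 0) {r : ℝ} (hr : 0 ≤ r)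
    (hO : (fun n => ∑ k ∈ Finset.Icc 0 n, f k) =O[atTop] fun n : ℕ => (n : ℝ) ^ r) {s : ℂ}
    (hs : r < s.re) :
    ∃ L, Tendsto (fun n => ∑ k ∈ Finset.Icc 0 n, f k * (k : ℂ) ^ (-s)) atTop (𝓝 L) := by
  have hs0 : s ≠ 0 := ne_zero_of_re_pos (hr.trans_lt hs)
  have hlim : Tendsto (fun n : ℕ => (n : ℂ) ^ (-s) * ∑ k ∈ Finset.Icc 0 n, f k) atTop (𝓝 0) := by
    refine (IsBigO.mul_atTop_rpow_natCast_of_isBigO_rpow (-s.re) r (-(s.re - r)) ?_ hO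
      (by linarith)).trans_tendsto
        ((tendsto_rpow_neg_atTop (sub_pos.mpr hs)).comp tendsto_natCast_atTop_atTop)
    exact isBigO_norm_left.mp (norm_ofReal_cpow_eventually_eq_atTop _).isBigO.natCast_atTop
  have hderiv : (fun t : ℝ => deriv (fun x : ℝ => (x : ℂ) ^ (-s)) t *
      ∑ k ∈ Finset.Icc 0 ⌊t⌋₊, f k) =O[atTop] fun t => t ^ ((-s - 1).re + r) := by
    refine .mul_atTop_rpow_of_isBigO_rpow (-s - 1).re r _ ?_ ?_ le_rfl
    · simpa using isBigO_deriv_ofReal_cpow_const_atTop (-s)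
    · exact (hO.comp_tendsto tendsto_nat_floor_atTop).trans <|
        isEquivalent_nat_floor.isBigO.rpow hr (eventually_ge_atTop 0)
  have hexp : (-s - 1).re + r < -1 := by
    simp only [sub_re, neg_re, one_re]
    linarith
  have hintegrable : IntegrableOn (deriv fun x : ℝ => (x : ℂ) ^ (-s)) (Set.Ici 1) :=
    (integrableOn_Ici_iff_integrableOn_Ioi (by finiteness)).mpr <|
      integrableOn_Ioi_deriv_ofReal_cpow zero_lt_one (by simpa using hr.trans_lt hs)
  have habel := tendsto_sum_mul_atTop_nhds_one_sub_integral₀ (f := fun x : ℝ => (x : ℂ) ^ (-s))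
    (l := 0) f hf (fun t ht => differentiableAt_id.ofReal_cpow_const (zero_lt_one.trans_le ht).ne'
      (neg_ne_zero.mpr hs0))
    hintegrable.locallyIntegrableOn hlim hderiv (integrableAtFilter_rpow_atTop_iff.mpr hexp)
  simp only [mul_comm (f _)]
  exact ⟨_, habel⟩

lemma exists_tendsto_sum_Icc_mul_cpow {f : ℕ → ℂ} {r : ℝ} (hr : 0 ≤ r)
    (hO : (fun n => ∑ k ∈ Finset.Icc 1 n, f k) =O[atTop] fun n : ℕ => (n : ℝ) ^ r) {s : ℂ}
    (hs : r < s.re) :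
    ∃ L, Tendsto (fun n => ∑ k ∈ Finset.Icc 1 n, f k * (k : ℂ) ^ (-s)) atTop (𝓝 L) := by
  have hsum (g : ℕ → ℂ) (n : ℕ) : ∑ k ∈ Finset.Icc 0 n, Function.update f 0 0 k * g k =
      ∑ k ∈ Finset.Icc 1 n, f k * g k := by
    rw [← Finset.insert_Icc_add_one_left_eq_Icc n.zero_le, Finset.sum_insert (by simp),
      Function.update_self, zero_mul, zero_add]
    exact Finset.sum_congr rfl fun k hk => by rw [Function.update_of_ne (by grind)]
  have hO' : (fun n => ∑ k ∈ Finset.Icc 0 n, Function.update f 0 0 k) =O[atTop]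
      fun n : ℕ => (n : ℝ) ^ r := by
    refine hO.congr_left fun n => ?_
    simpa only [Pi.one_apply, mul_one] using (hsum 1 n).symm
  simpa only [hsum] using
    exists_tendsto_sum_Icc_zero_mul_cpow (Function.update_self 0 0 f) hr hO' hs

end AbelSummation

section RieszMean

open Asymptotics Topology

variable {E : Type*} [NormedAddCommGroup E] [NormedSpace ℝ E]

lemma tendsto_inv_sum_smul_sum_smul {w : ℕ → ℝ} {u : ℕ → E} {L : E} (hw : ∀ n, 0 ≤ w n)
    (hwtop : Tendsto (fun n => ∑ k ∈ Finset.range n, w k) atTop atTop)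
    (hu : Tendsto u atTop (𝓝 L)) :
    Tendsto (fun n => (∑ k ∈ Finset.range n, w k)⁻¹ • ∑ k ∈ Finset.range n, w k • u k) atTop
      (𝓝 L) := by
  have hsmall : (fun k => w k • (u k - L)) =o[atTop] w := by
    have := (isBigO_refl w atTop).smul_isLittleO
      ((isLittleO_one_iff ℝ).mpr (tendsto_sub_nhds_zero_iff.mpr hu))
    simpa only [smul_eq_mul, mul_one] using this
  rw [← tendsto_sub_nhds_zero_iff, ← isLittleO_one_iff ℝ]
  refine ((isBigO_refl (fun n => (∑ k ∈ Finset.range n, w k)⁻¹) atTop).smul_isLittleO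
    (hsmall.sum_range hw hwtop)).congr' ?_ ?_ <;>
    filter_upwards [hwtop.eventually_ne_atTop 0] with n hn
  · simp only [smul_sub, Finset.sum_sub_distrib, ← Finset.sum_smul, inv_smul_smul₀ hn]
  · rw [smul_eq_mul, inv_mul_cancel₀ hn]

lemma sum_range_sub_smul {R G : Type*} [Ring R] [AddCommGroup G] [Module R G] (lam : ℕ → R)
    (c : ℕ → G) (M : ℕ) :
    ∑ n ∈ Finset.range M, (lam M - lam n) • c n =
      ∑ k ∈ Finset.range M, (lam (k + 1) - lam k) • ∑ n ∈ Finset.range (k + 1), c n := by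
  induction M with
  | zero => simp
  | succ M ih =>
    rw [Finset.sum_range_succ (fun k => (lam (k + 1) - lam k) • _), ← ih, Finset.smul_sum,
      Finset.sum_range_succ, Finset.sum_range_succ, ← add_assoc, ← Finset.sum_add_distrib]
    congr 1
    refine Finset.sum_congr rfl fun n _ => ?_
    rw [← add_smul]
    congr 1
    abel

lemma tendsto_riesz_mean {lam : ℕ → ℝ} {c : ℕ → E} {L : E} (hmono : Monotone lam)
    (htop : Tendsto lam atTop atTop)
    (hc : Tendsto (fun M => ∑ n ∈ Finset.range M, c n) atTop (𝓝 L)) :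
    Tendsto (fun M => (lam M - lam 0)⁻¹ • ∑ n ∈ Finset.range M, (lam M - lam n) • c n) atTop
      (𝓝 L) := by
  simp only [sum_range_sub_smul, ← Finset.sum_range_sub]
  refine tendsto_inv_sum_smul_sum_smul (fun k => sub_nonneg.mpr (hmono k.le_succ)) ?_
    ((tendsto_add_atTop_iff_nat 1).mpr hc)
  simp only [Finset.sum_range_sub]
  exact tendsto_atTop_add_const_right _ _ htop

end RieszMean

section DirichletSeries

open Asymptotics Complex FourierTransform MeasureTheory Topology

/-- The part of the Dirichlet series `∑ a n * n ^ (-s)` indexed by `S` is absolutely convergent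
on the vertical line `Re s = σ` and bounded there by `B`. For `S = ⟨P_N⟩` this is the condition on
the projection `π_N`, read on a single line. -/
def SubseriesBoundedOnLine (a : ℕ → ℂ) (S : Set ℕ) (σ B : ℝ) : Prop :=
  ∀ s : ℂ, s.re = σ → Summable (fun n : S => ‖a n * ((n : ℕ) : ℂ) ^ (-s)‖) ∧
    ‖∑' n : S, a n * ((n : ℕ) : ℂ) ^ (-s)‖ ≤ B

lemma natCast_cpow_neg_mul_fourierChar {n : ℕ} (hn : n ≠ 0) (s : ℂ) (ξ : ℝ) :
    (n : ℂ) ^ (-s) * Real.fourierChar (inner ℝ ξ (Real.log n)) =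
      (n : ℂ) ^ (-(s - (2 * Real.pi * ξ : ℝ) * I)) := by
  rw [neg_sub, sub_eq_neg_add, cpow_add _ _ (Nat.cast_ne_zero.mpr hn)]
  congr 1
  rw [Real.fourierChar_apply, cpow_def_of_ne_zero (Nat.cast_ne_zero.mpr hn), ← natCast_log,
    RCLike.inner_apply, conj_trivial]
  push_cast
  ring_nf

lemma SubseriesBoundedOnLine.norm_sum_mul_fourierInv_le {a : ℕ → ℂ} {S : Set ℕ} {s : ℂ} {B : ℝ}
    (h : SubseriesBoundedOnLine a S s.re B) {M : ℕ} (hS : ∀ n ≤ M, n ∈ S ↔ 0 < n) {K : ℝ → ℂ}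
    (hK : Integrable K) (hKzero : ∀ n > M, 𝓕⁻ K (Real.log n) = 0) :
    ‖∑ n ∈ Finset.Icc 1 M, a n * (n : ℂ) ^ (-s) * 𝓕⁻ K (Real.log n)‖ ≤ B * ∫ ξ, ‖K ξ‖ := by
  have hne (n : S) : (n : ℕ) ≠ 0 := fun hn => by
    simpa using (hS 0 M.zero_le).mp (hn ▸ n.2)
  have hbound (ξ : ℝ) : ‖∑' n : S, a n * ((n : ℕ) : ℂ) ^ (-s) *
      Real.fourierChar (inner ℝ ξ (Real.log (n : ℕ)))‖ ≤ B := by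
    simp only [mul_assoc, natCast_cpow_neg_mul_fourierChar (hne _)]
    exact (h _ (by simp)).2
  have hsum : ∑' n : S, a n * ((n : ℕ) : ℂ) ^ (-s) * 𝓕⁻ K (Real.log (n : ℕ)) =
      ∑ n ∈ Finset.Icc 1 M, a n * (n : ℂ) ^ (-s) * 𝓕⁻ K (Real.log n) := by
    rw [tsum_subtype S fun n : ℕ => a n * (n : ℂ) ^ (-s) * 𝓕⁻ K (Real.log n),
      tsum_eq_sum (s := Finset.Icc 1 M)]
    · refine Finset.sum_congr rfl fun n hn => Set.indicator_of_mem ?_ _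
      rw [Finset.mem_Icc] at hn
      exact (hS n hn.2).mpr hn.1
    · intro n hn
      rw [Set.indicator_apply_eq_zero]
      intro hnS
      have hMn : M < n := by
        by_contra! hnM
        exact hn (Finset.mem_Icc.mpr ⟨(hS n hnM).mp hnS, hnM⟩)
      rw [hKzero n hMn, mul_zero]
  rw [← hsum]
  exact norm_tsum_mul_fourierInv_le (h s rfl).1 hbound hK

lemma SubseriesBoundedOnLine.norm_sum_mul_trapezoid_le {a : ℕ → ℂ} {S : Set ℕ} {s : ℂ} {B : ℝ}
    (h : SubseriesBoundedOnLine a S s.re B) {M : ℕ} (hS : ∀ n ≤ M, n ∈ S ↔ 0 < n) {r : ℝ}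
    (hr : 0 ≤ r) (hrM : r < Real.log (M + 1)) :
    ‖∑ n ∈ Finset.Icc 1 M, a n * (n : ℂ) ^ (-s) *
        trapezoid r (Real.log (M + 1)) (Real.log n)‖ ≤
      B * ∫ ξ, ‖𝓕 (fun x => (trapezoid r (Real.log (M + 1)) x : ℂ)) ξ‖ := by
  have hbound := h.norm_sum_mul_fourierInv_le hS (integrable_fourier_trapezoid hr hrM)
  simp only [fourierInv_fourier_trapezoid hr hrM] at hbound
  refine hbound fun n hn => ?_
  have hlog : Real.log (M + 1) ≤ Real.log n :=
    Real.log_le_log (by positivity) (by exact_mod_cast hn)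
  rw [trapezoid_eq_zero hrM.le (hlog.trans (le_abs_self _)), ofReal_zero]

lemma inv_log_add_one_sub_log_le {x : ℝ} (hx : 0 < x) :
    (Real.log (x + 1) - Real.log x)⁻¹ ≤ x + 1 := by
  refine inv_le_of_inv_le₀ (by positivity) ?_
  rw [← Real.log_div (by positivity) hx.ne']
  calc (x + 1)⁻¹ = 1 - ((x + 1) / x)⁻¹ := by field_simp; ring
    _ ≤ Real.log ((x + 1) / x) := Real.one_sub_inv_le_log_of_pos (by positivity)

lemma integral_norm_fourier_trapezoid_log_le {x ε : ℝ} (hx : 1 ≤ x) (hε : 0 < ε) (hε1 : ε ≤ 1) :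
    ∫ ξ, ‖𝓕 (fun u => (trapezoid (Real.log x) (Real.log (x + 1)) u : ℂ)) ξ‖ ≤
      2 * (1 + 2 / ε) * 4 ^ ε * (∫ ξ : ℝ, (1 + ‖ξ‖) ^ (-(1 + ε))) * (x + 1) ^ (2 * ε) := by
  have hlog : Real.log x < Real.log (x + 1) := Real.log_lt_log (by linarith) (by linarith)
  have hgap : 2 * (1 + (Real.log (x + 1) - Real.log x)⁻¹) ≤ 4 * (x + 1) := by
    linarith [inv_log_add_one_sub_log_le (x := x) (by positivity)]
  have hwidth : 1 + (Real.log (x + 1) + Real.log x) ≤ (1 + 2 / ε) * (x + 1) ^ ε := by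
    have hone : 1 ≤ (x + 1) ^ ε := Real.one_le_rpow (by linarith) hε.le
    have hlogle : Real.log (x + 1) ≤ (x + 1) ^ ε / ε := Real.log_le_rpow_div (by positivity) hε
    calc 1 + (Real.log (x + 1) + Real.log x)
        ≤ (x + 1) ^ ε + ((x + 1) ^ ε / ε + (x + 1) ^ ε / ε) := by linarith
      _ = (1 + 2 / ε) * (x + 1) ^ ε := by ring
  have : 0 ≤ (Real.log (x + 1) - Real.log x)⁻¹ := inv_nonneg.mpr (by linarith)
  set C := ∫ ξ : ℝ, (1 + ‖ξ‖) ^ (-(1 + ε))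
  have : 0 ≤ C := integral_nonneg fun ξ => by positivity
  calc ∫ ξ, ‖𝓕 (fun u => (trapezoid (Real.log x) (Real.log (x + 1)) u : ℂ)) ξ‖
      ≤ 2 * (1 + (Real.log (x + 1) + Real.log x)) *
          (2 * (1 + (Real.log (x + 1) - Real.log x)⁻¹)) ^ ε * C :=
        integral_norm_fourier_trapezoid_le (Real.log_nonneg hx) hlog hε hε1
    _ ≤ 2 * ((1 + 2 / ε) * (x + 1) ^ ε) * (4 * (x + 1)) ^ ε * C := by gcongr
    _ = 2 * (1 + 2 / ε) * 4 ^ ε * C * (x + 1) ^ (2 * ε) := by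
        rw [Real.mul_rpow (by norm_num) (by positivity), two_mul ε, Real.rpow_add (by positivity)]
        ring

lemma integral_norm_fourier_trapezoid_log_isBigO {r : ℝ} (hr : 0 < r) :
    (fun x => ∫ ξ, ‖𝓕 (fun u => (trapezoid (Real.log x) (Real.log (x + 1)) u : ℂ)) ξ‖)
      =O[atTop] fun x => x ^ r := by
  set ε := min 1 (r / 2)
  have hε : 0 < ε := by positivity
  have hεr : 2 * ε ≤ r := by linarith [min_le_right 1 (r / 2)]
  set C := 2 * (1 + 2 / ε) * 4 ^ ε * ∫ ξ : ℝ, (1 + ‖ξ‖) ^ (-(1 + ε))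
  have : 0 ≤ C := mul_nonneg (by positivity) (integral_nonneg fun ξ => by positivity)
  refine .of_bound (C * 2 ^ r) ?_
  filter_upwards [eventually_ge_atTop 1] with x hx
  rw [Real.norm_of_nonneg (integral_nonneg fun ξ => norm_nonneg _),
    Real.norm_of_nonneg (by positivity)]
  calc ∫ ξ, ‖𝓕 (fun u => (trapezoid (Real.log x) (Real.log (x + 1)) u : ℂ)) ξ‖
      ≤ C * (x + 1) ^ (2 * ε) := integral_norm_fourier_trapezoid_log_le hx hε (min_le_left _ _)
    _ ≤ C * (2 * x) ^ r := by
        gcongr ?_ * ?_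
        exact (Real.rpow_le_rpow_of_exponent_le (by linarith) hεr).trans <|
          Real.rpow_le_rpow (by positivity) (by linarith) hr.le
    _ = C * 2 ^ r * x ^ r := by
        rw [Real.mul_rpow (by norm_num) (by positivity)]
        ring

lemma sum_range_succ_eq_sum_Icc {E : Type*} [AddCommMonoid E] (f : ℕ → E) (M : ℕ) :
    ∑ n ∈ Finset.range M, f (n + 1) = ∑ n ∈ Finset.Icc 1 M, f n := by
  rw [Finset.range_eq_Ico, Finset.sum_Ico_add', zero_add]
  rfl

variable {a : ℕ → ℂ} {S : ℕ → Set ℕ} {s : ℂ} {B : ℝ}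

lemma SubseriesBoundedOnLine.isBigO_sum_Icc (hS : ∀ M, ∀ n ≤ M, n ∈ S M ↔ 0 < n)
    (h : ∀ M, SubseriesBoundedOnLine a (S M) s.re B) {r : ℝ} (hr : 0 < r) :
    (fun M => ∑ n ∈ Finset.Icc 1 M, a n * (n : ℂ) ^ (-s)) =O[atTop]
      fun M : ℕ => (M : ℝ) ^ r := by
  refine IsBigO.trans (.of_bound B ?_)
    ((integral_norm_fourier_trapezoid_log_isBigO hr).comp_tendsto tendsto_natCast_atTop_atTop)
  filter_upwards [eventually_ge_atTop 1] with M hM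
  have hM1 : (1 : ℝ) ≤ M := by exact_mod_cast hM
  have hlog : Real.log M < Real.log (M + 1) := Real.log_lt_log (by linarith) (by linarith)
  rw [Function.comp_apply, Real.norm_of_nonneg (integral_nonneg fun ξ => norm_nonneg _)]
  refine le_of_eq_of_le ?_ ((h M).norm_sum_mul_trapezoid_le (hS M) (Real.log_nonneg hM1) hlog)
  congr 1
  refine Finset.sum_congr rfl fun n hn => ?_
  obtain ⟨hn1, hnM⟩ := Finset.mem_Icc.mp hn
  have hlogn : |Real.log n| ≤ Real.log M := by
    rw [abs_of_nonneg (Real.log_natCast_nonneg n)]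
    exact Real.log_le_log (by exact_mod_cast hn1) (by exact_mod_cast hnM)
  rw [trapezoid_eq_one hlog hlogn, ofReal_one, mul_one]

lemma SubseriesBoundedOnLine.exists_tendsto_sum_Icc (hS : ∀ M, ∀ n ≤ M, n ∈ S M ↔ 0 < n)
    {σ : ℝ} (h : ∀ M, SubseriesBoundedOnLine a (S M) σ B) (hs : σ < s.re) :
    ∃ L, Tendsto (fun M => ∑ n ∈ Finset.Icc 1 M, a n * (n : ℂ) ^ (-s)) atTop (𝓝 L) := by
  have hδ : 0 < s.re - σ := sub_pos.mpr hs
  have hre : (s - (s.re - σ : ℝ)).re = σ := by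
    rw [sub_re, ofReal_re, sub_sub_cancel]
  have hO := SubseriesBoundedOnLine.isBigO_sum_Icc hS (hre ▸ h) (half_pos hδ)
  obtain ⟨L, hL⟩ := exists_tendsto_sum_Icc_mul_cpow (s := (s.re - σ : ℝ)) (half_pos hδ).le hO
    (by rw [ofReal_re]; linarith)
  refine ⟨L, hL.congr fun M => Finset.sum_congr rfl fun n hn => ?_⟩
  have hn0 : (n : ℂ) ≠ 0 := Nat.cast_ne_zero.mpr (by grind)
  rw [mul_assoc, ← cpow_add _ _ hn0]
  ring_nf

lemma SubseriesBoundedOnLine.norm_le_of_tendsto_sum_Icc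
    (hS : ∀ M, ∀ n ≤ M, n ∈ S M ↔ 0 < n) (h : ∀ M, SubseriesBoundedOnLine a (S M) s.re B)
    {L : ℂ} (hL : Tendsto (fun M => ∑ n ∈ Finset.Icc 1 M, a n * (n : ℂ) ^ (-s)) atTop (𝓝 L)) :
    ‖L‖ ≤ B := by
  have hmono : Monotone fun n : ℕ => Real.log (n + 1) := fun m n hmn =>
    Real.log_le_log (by positivity) (by gcongr)
  have htop : Tendsto (fun n : ℕ => Real.log (n + 1)) atTop atTop :=
    Real.tendsto_log_atTop.comp <|
      tendsto_atTop_add_const_right _ _ tendsto_natCast_atTop_atTop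
  simp only [← sum_range_succ_eq_sum_Icc] at hL
  refine le_of_tendsto (tendsto_riesz_mean hmono htop hL).norm ?_
  filter_upwards [eventually_ge_atTop 1] with M hM
  have hlog : 0 < Real.log (M + 1) := Real.log_pos (by exact_mod_cast Nat.lt_succ_of_le hM)
  have hbound := (h M).norm_sum_mul_trapezoid_le (hS M) le_rfl hlog
  rw [integral_norm_fourier_trapezoid_zero hlog, mul_one] at hbound
  refine le_of_eq_of_le ?_ hbound
  rw [← sum_range_succ_eq_sum_Icc, Finset.smul_sum]
  congr 1
  refine Finset.sum_congr rfl fun n hn => ?_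
  have hn0 : 0 ≤ Real.log ((n + 1 : ℕ) : ℝ) := Real.log_natCast_nonneg _
  have hnM : Real.log ((n + 1 : ℕ) : ℝ) ≤ Real.log (M + 1) := by
    simpa using hmono (Finset.mem_range.mp hn).le
  rw [trapezoid_eq_div hlog (abs_nonneg _) (by rwa [abs_of_nonneg hn0]), abs_of_nonneg hn0]
  rw [smul_smul, real_smul, inv_mul_eq_div, mul_comm, Nat.cast_zero, zero_add, Real.log_one,
    ← Nat.cast_add_one n]

end DirichletSeries

lemma mem_smoothSet_iff_of_lt {n N : ℕ} (hnN : n < N) : n ∈ smoothSet N ↔ 0 < n := by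
  refine ⟨fun h => h.1, fun hn => ⟨hn, fun p hp hpn => ⟨Nat.count Nat.Prime p, ?_, ?_⟩⟩⟩
  · exact (Nat.count_le (p := Nat.Prime)).trans_lt <| (Nat.le_of_dvd hn hpn).trans_lt hnN
  · exact (Nat.nth_count hp).symm

theorem stmt_11_general (a : ℕ → ℂ) (Δ B : ℝ)
    (hproj : ∀ N : ℕ, 1 ≤ N → ∀ s : ℂ, Δ < s.re →
      Summable (fun n : smoothSet N => ‖a n * ((n : ℕ) : ℂ) ^ (-s)‖) ∧
        ‖∑' n : smoothSet N, a n * ((n : ℕ) : ℂ) ^ (-s)‖ ≤ B) :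
    ∀ s : ℂ, Δ < s.re → ∃ L : ℂ,
      Tendsto (fun M : ℕ => ∑ n ∈ Finset.range M, a (n + 1) * ((n + 1 : ℕ) : ℂ) ^ (-s))
        atTop (nhds L) ∧ ‖L‖ ≤ B := by
  intro s hs
  have hsmooth (M n : ℕ) (hn : n ≤ M) : n ∈ smoothSet (M + 1) ↔ 0 < n :=
    mem_smoothSet_iff_of_lt (Nat.lt_succ_of_le hn)
  have hline {σ : ℝ} (hσ : Δ < σ) (M : ℕ) :
      SubseriesBoundedOnLine a (smoothSet (M + 1)) σ B := fun z hz =>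
    hproj (M + 1) M.succ_pos z (hz ▸ hσ)
  obtain ⟨σ, hΔσ, hσs⟩ := exists_between hs
  obtain ⟨L, hL⟩ := SubseriesBoundedOnLine.exists_tendsto_sum_Icc hsmooth (hline hΔσ) hσs
  refine ⟨L, ?_, SubseriesBoundedOnLine.norm_le_of_tendsto_sum_Icc hsmooth (hline hs) hL⟩
  simpa only [← sum_range_succ_eq_sum_Icc] using hL

/-- If the Dirichlet series `∑ a_n n^{-s}` converges absolutely for `Re s > Δ'` and
each projection `∑_{n ∈ ⟨P_N⟩} a_n n^{-s}` is absolutely summable and bounded by `B`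
on `Re s > Δ`, then for each `s` with `Re s > Δ` the partial sums of the Dirichlet
series converge to a limit of modulus at most `B`. -/
theorem stmt_11 (a : ℕ → ℂ) (Δ Δ' B : ℝ) (hΔ : 0 ≤ Δ) (hΔ' : Δ ≤ Δ') (hB : 0 ≤ B)
    (habs : ∀ σ' : ℝ, Δ' < σ' →
      Summable (fun n : ℕ => ‖a (n + 1)‖ * ((n + 1 : ℕ) : ℝ) ^ (-σ')))
    (hproj : ∀ N : ℕ, 1 ≤ N → ∀ s : ℂ, Δ < s.re →
      Summable (fun n : smoothSet N => ‖a n * ((n : ℕ) : ℂ) ^ (-s)‖) ∧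
        ‖∑' n : smoothSet N, a n * ((n : ℕ) : ℂ) ^ (-s)‖ ≤ B) :
    ∀ s : ℂ, Δ < s.re → ∃ L : ℂ,
      Tendsto (fun M : ℕ => ∑ n ∈ Finset.range M, a (n + 1) * ((n + 1 : ℕ) : ℂ) ^ (-s))
        atTop (nhds L) ∧ ‖L‖ ≤ B :=
  stmt_11_general a Δ B hproj
end

section
/- (Schnee's theorem) Let a : ℕ≥1 → ℂ and suppose the partial sums ∑_{n=1}^{M} a_n n^{-s_0} converge as M → ∞ for some complex number s_0. Let F be a function analytic on the right half-plane Ω_0 = {s : Re(s) > 0} such that F(s) equals the limit of the partial sums ∑_{n=1}^{M} a_n n^{-s} for every s with Re(s) > Re(s_0), and suppose that for every δ > 0 and every ε > 0 there is a constant C > 0 with |F(s)| ≤ C·(1 + |s|)^ε for all s with Re(s) ≥ δ. Then for every s with Re(s) > 0, the partial sums ∑_{n=1}^{M} a_n n^{-s} converge as M → ∞ to F(s). -/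
open Filter

/-!
Fix `w` and a line `Re s = -η` such that `Re (w + s)` is still positive on it, and integrate
`(Y ^ s - X ^ s) / s ^ 2` against `F (w + s)` along this line, where `X = M` and `Y = M + 1`.
Split `F` into the partial sum of length `M` and the remainder. The remainder decays like
`(M + 1) ^ (-s)` to the right, which beats the growth of the kernel, so its contour is pushed to
`+∞`, crossing only the pole at `s = 0`, with residue `log (Y / X)` times the remainder at `w`. The
partial sum grows at most like `M ^ (-s)` to the left, so its contour is pushed to `-∞`, where it
contributes nothing. Finally `|Y ^ s - X ^ s|` is at most of order
`X ^ (-η) * (log (Y / X) * |s|) ^ (1 - κ)` on the line for every `0 ≤ κ ≤ 1`. When `κ` exceeds the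
growth exponent of `F` the integral converges absolutely, and dividing by `log (Y / X) ≍ 1 / M`
bounds the remainder at `w` by a multiple of `M ^ (κ - η)`, which tends to `0` when `κ < η`.
-/

section Schnee

open Asymptotics Bornology Complex MeasureTheory Topology

variable {E : Type*} [NormedAddCommGroup E]

/-- The filter of neighbourhoods of infinity inside the closed right half-plane `Re s ≥ σ`. It
carries the decay hypotheses that allow a vertical contour to be pushed off to the right. -/
noncomputable def halfPlaneAtInfinity (σ : ℝ) : Filter ℂ :=
  cobounded ℂ ⊓ 𝓟 {s : ℂ | σ ≤ s.re}

theorem halfPlaneAtInfinity_le_cobounded (σ : ℝ) : halfPlaneAtInfinity σ ≤ cobounded ℂ :=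
  inf_le_left

theorem halfPlaneAtInfinity_le_principal (σ : ℝ) :
    halfPlaneAtInfinity σ ≤ 𝓟 {s : ℂ | σ ≤ s.re} :=
  inf_le_right

theorem eventually_halfPlaneAtInfinity {σ : ℝ} {P : ℂ → Prop} :
    (∀ᶠ s in halfPlaneAtInfinity σ, P s) ↔
      ∃ R : ℝ, ∀ s : ℂ, σ ≤ s.re → R ≤ ‖s‖ → P s := by
  rw [halfPlaneAtInfinity, eventually_inf_principal, ← comap_norm_atTop,
    (atTop_basis.comap _).eventually_iff]
  simp only [true_and, Set.mem_preimage, Set.mem_Ici, Set.mem_ofPred_eq]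
  exact exists_congr fun R => forall_congr' fun s => forall_comm

theorem tendsto_add_mul_I_halfPlaneAtInfinity (σ : ℝ) :
    Tendsto (fun t : ℝ => (σ + t * I : ℂ)) (cocompact ℝ) (halfPlaneAtInfinity σ) := by
  refine tendsto_inf.2 ⟨?_, tendsto_principal.2 (Eventually.of_forall fun t => by simp)⟩
  refine tendsto_norm_atTop_iff_cobounded.1
    (tendsto_atTop_mono (fun t => ?_) (tendsto_norm_cocompact_atTop (E := ℝ)))
  simpa using abs_im_le_norm (σ + t * I : ℂ)

theorem isTheta_one_add_norm_add_rpow (w : ℂ) (r : ℝ) :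
    (fun s : ℂ => (1 + ‖w + s‖) ^ r) =Θ[⊤] fun s => (1 + ‖s‖) ^ r := by
  refine IsTheta.rpow (Eventually.of_forall fun s => by positivity)
    (Eventually.of_forall fun s => by positivity) ⟨?_, ?_⟩ <;>
  refine IsBigO.of_bound (1 + ‖w‖) (Eventually.of_forall fun s => ?_) <;>
  rw [Real.norm_of_nonneg (by positivity), Real.norm_of_nonneg (by positivity)]
  · nlinarith [norm_add_le w s, norm_nonneg w, norm_nonneg s]
  · have hs : ‖s‖ ≤ ‖w + s‖ + ‖w‖ := by simpa using norm_sub_le (w + s) w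
    nlinarith [norm_nonneg w, norm_nonneg (w + s)]

theorem isBigO_inv_cobounded :
    (fun s : ℂ => s⁻¹) =O[cobounded ℂ] fun s => (1 + ‖s‖) ^ (-1 : ℝ) := by
  refine IsBigO.of_bound 2 ?_
  filter_upwards [(tendsto_norm_cobounded_atTop (E := ℂ)).eventually_ge_atTop 1] with s hs
  rw [Real.norm_of_nonneg (by positivity), norm_inv, Real.rpow_neg_one, ← div_eq_mul_inv,
    inv_eq_one_div, div_le_div_iff₀ (by positivity) (by positivity)]
  linarith

theorem isBigO_add_inv_cobounded (w : ℂ) :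
    (fun s : ℂ => (w + s)⁻¹) =O[cobounded ℂ] fun s => (1 + ‖s‖) ^ (-1 : ℝ) :=
  (isBigO_inv_cobounded.comp_tendsto (tendsto_const_add_cobounded w)).trans
    ((isTheta_one_add_norm_add_rpow w (-1)).isBigO.mono le_top)

theorem one_add_norm_rpow_mul_rpow (a b : ℝ) :
    (fun s : E => (1 + ‖s‖) ^ a * (1 + ‖s‖) ^ b) = fun s => (1 + ‖s‖) ^ (a + b) :=
  funext fun s => (Real.rpow_add (by positivity) a b).symm

theorem verticalIntegrable_of_isBigO {f : ℂ → E} {σ p : ℝ} (hp : 1 < p)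
    (hf : ContinuousOn f {s : ℂ | s.re = σ})
    (hO : f =O[halfPlaneAtInfinity σ] fun s => (1 + ‖s‖) ^ (-p)) : VerticalIntegrable f σ := by
  have hcont : Continuous fun t : ℝ => f (σ + t * I) :=
    hf.comp_continuous (by fun_prop) fun t => by simp
  have hweight : (fun t : ℝ => (1 + ‖(σ + t * I : ℂ)‖) ^ (-p)) =O[cocompact ℝ]
      fun t : ℝ => (1 + ‖t‖) ^ (-p) := by
    refine IsBigO.of_norm_le fun t => ?_
    rw [Real.norm_of_nonneg (by positivity)]
    refine Real.rpow_le_rpow_of_nonpos (by positivity) ?_ (by linarith)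
    simpa using abs_im_le_norm (σ + t * I : ℂ)
  exact hcont.locallyIntegrable.integrable_of_isBigO_cocompact
    ((hO.comp_tendsto (tendsto_add_mul_I_halfPlaneAtInfinity σ)).trans hweight)
    ((integrable_one_add_norm (by simpa using hp)).integrableAtFilter _)

variable [NormedSpace ℂ E]

theorem norm_integral_vertical_segment_le {f : ℂ → E} {σ R B : ℝ}
    (hf : DifferentiableOn ℂ f {s : ℂ | σ ≤ s.re}) (hσR : |σ| ≤ R)
    (hB : ∀ s : ℂ, σ ≤ s.re → R ≤ ‖s‖ → ‖f s‖ ≤ B) :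
    ‖∫ t in (-R)..R, f (σ + t * I)‖ ≤ 6 * R * B := by
  have hR : 0 ≤ R := (abs_nonneg σ).trans hσR
  have hwidth : σ ≤ σ + 2 * R := by linarith
  have hsquare := integral_boundary_rect_eq_zero_of_differentiableOn f
    (σ - R * I) ((σ + 2 * R : ℝ) + R * I) (hf.mono fun s hs => by
      have hre := (mem_reProdIm.1 hs).1
      simp only [sub_re, ofReal_re, re_ofReal_mul, I_re, mul_zero, sub_zero, add_re, add_zero]
        at hre
      rw [Set.uIcc_of_le hwidth] at hre
      exact hre.1)
  simp only [sub_re, sub_im, add_re, add_im, ofReal_re, ofReal_im, re_ofReal_mul, im_ofReal_mul,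
    I_re, I_im, mul_zero, mul_one, sub_zero, zero_sub, add_zero, zero_add] at hsquare
  have hhorizontal : ∀ y : ℝ, |y| = R →
      ‖∫ x in σ..(σ + 2 * R), f (x + y * I)‖ ≤ 2 * R * B := fun y hy => by
    refine (intervalIntegral.norm_integral_le_of_norm_le_const (C := B) fun x hx => ?_).trans_eq ?_
    · rw [Set.uIoc_of_le hwidth] at hx
      refine hB _ (by simpa using hx.1.le) ?_
      simpa [hy] using abs_im_le_norm (x + y * I : ℂ)
    · rw [add_sub_cancel_left, abs_of_nonneg (by positivity), mul_comm]
  have hright : ‖I • ∫ t in (-R)..R, f ((σ + 2 * R : ℝ) + t * I)‖ ≤ 2 * R * B := by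
    rw [norm_smul, norm_I, one_mul]
    refine (intervalIntegral.norm_integral_le_of_norm_le_const (C := B) fun t _ => ?_).trans_eq ?_
    · refine hB _ (by simpa using hwidth) ?_
      calc R ≤ σ + 2 * R := by linarith [neg_le_of_abs_le hσR]
        _ ≤ _ := by simpa using re_le_norm ((σ + 2 * R : ℝ) + t * I : ℂ)
    · rw [sub_neg_eq_add, ← two_mul, abs_of_nonneg (by positivity), mul_comm]
  calc ‖∫ t in (-R)..R, f (σ + t * I)‖ = ‖I • ∫ t in (-R)..R, f (σ + t * I)‖ := by
        rw [norm_smul, norm_I, one_mul]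
    _ ≤ 2 * R * B + 2 * R * B + 2 * R * B := by
        rw [← sub_eq_zero.1 hsquare]
        exact norm_add_le_of_le (norm_sub_le_of_le
          (hhorizontal (-R) (by rw [abs_neg, abs_of_nonneg hR]))
          (hhorizontal R (abs_of_nonneg hR))) hright
    _ = 6 * R * B := by ring

theorem integral_vertical_eq_zero {f : ℂ → E} {σ p : ℝ} (hp : 1 < p)
    (hf : DifferentiableOn ℂ f {s : ℂ | σ ≤ s.re})
    (hO : f =O[halfPlaneAtInfinity σ] fun s => (1 + ‖s‖) ^ (-p)) :
    ∫ t : ℝ, f (σ + t * I) = 0 := by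
  have hint : VerticalIntegrable f σ :=
    verticalIntegrable_of_isBigO hp (hf.continuousOn.mono fun s hs => hs.ge) hO
  obtain ⟨c, hc, hbound⟩ := hO.exists_pos
  obtain ⟨R₀, hR₀⟩ := eventually_halfPlaneAtInfinity.1 hbound.bound
  refine tendsto_nhds_unique
    (intervalIntegral_tendsto_integral hint tendsto_neg_atTop_atBot tendsto_id) ?_
  have hsegment : ∀ᶠ R : ℝ in atTop,
      ‖∫ t in (-R)..R, f (σ + t * I)‖ ≤ 6 * c * R ^ (-(p - 1)) := by
    filter_upwards [eventually_ge_atTop R₀, eventually_ge_atTop |σ|, eventually_gt_atTop 0]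
      with R hRR₀ hσR hR
    calc _ ≤ 6 * R * (c * R ^ (-p)) := by
          refine norm_integral_vertical_segment_le hf hσR fun s hs hRs =>
            (hR₀ s hs (hRR₀.trans hRs)).trans ?_
          rw [Real.norm_of_nonneg (by positivity)]
          gcongr c * ?_
          exact Real.rpow_le_rpow_of_nonpos hR (by linarith) (by linarith)
      _ = 6 * c * (R ^ (-p) * R) := by ring
      _ = 6 * c * R ^ (-(p - 1)) := by
          rw [← Real.rpow_add_one hR.ne']
          ring_nf
  refine squeeze_zero_norm' hsegment ?_
  simpa using (tendsto_rpow_neg_atTop (sub_pos.2 hp)).const_mul (6 * c)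

theorem integral_inv_sq_add_sq_univ {c : ℝ} (hc : c ≠ 0) :
    ∫ t : ℝ, (c ^ 2 + t ^ 2)⁻¹ = Real.pi / |c| := by
  have hscale : ∀ t : ℝ, (c ^ 2 + t ^ 2)⁻¹ = (c ^ 2)⁻¹ * (1 + (t / c) ^ 2)⁻¹ := fun t => by
    field_simp
  simp only [hscale]
  rw [integral_const_mul, Measure.integral_comp_div (fun t : ℝ => (1 + t ^ 2)⁻¹),
    integral_univ_inv_one_add_sq, smul_eq_mul, ← sq_abs c]
  field_simp

theorem integral_vertical_inv_mul_div {η : ℝ} (hη : 0 < η) :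
    ∫ t : ℝ, (((-η : ℝ) + t * I)⁻¹ * (2 * η / (2 * η + ((-η : ℝ) + t * I))) : ℂ) =
      -(2 * Real.pi) := by
  have hreal : ∀ t : ℝ, (((-η : ℝ) + t * I)⁻¹ * (2 * η / (2 * η + ((-η : ℝ) + t * I))) : ℂ) =
      ((-(2 * η) * (η ^ 2 + t ^ 2)⁻¹ : ℝ) : ℂ) := fun t => by
    have hprod : (((-η : ℝ) + t * I) * (2 * η + ((-η : ℝ) + t * I)) : ℂ) =
        ((-(η ^ 2 + t ^ 2) : ℝ) : ℂ) := by
      push_cast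
      linear_combination (t : ℂ) ^ 2 * I_sq
    rw [inv_mul_eq_div, div_div, mul_comm (2 * η + _ : ℂ), hprod]
    push_cast
    rw [div_neg, div_eq_mul_inv, neg_mul]
  simp only [hreal]
  rw [integral_complex_ofReal, integral_const_mul, integral_inv_sq_add_sq_univ hη.ne',
    abs_of_pos hη]
  push_cast
  field_simp [ofReal_ne_zero.2 hη.ne']

theorem isBigO_one_add_norm_rpow_of_le {a b : ℝ} (hab : a ≤ b) (l : Filter ℂ) :
    (fun s : ℂ => (1 + ‖s‖) ^ a) =O[l] fun s => (1 + ‖s‖) ^ b := by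
  refine IsBigO.of_norm_le fun s => ?_
  rw [Real.norm_of_nonneg (by positivity)]
  exact Real.rpow_le_rpow_of_exponent_le (by linarith [norm_nonneg s]) hab

theorem isBigO_inv_smul {G : ℂ → E} {l : Filter ℂ} {r : ℝ} (hl : l ≤ cobounded ℂ)
    (hG : G =O[l] fun s => (1 + ‖s‖) ^ r) :
    (fun s => s⁻¹ • G s) =O[l] fun s => (1 + ‖s‖) ^ (-(1 - r)) := by
  have h := (isBigO_inv_cobounded.mono hl).smul hG
  simpa only [smul_eq_mul, one_add_norm_rpow_mul_rpow, neg_add_eq_sub, neg_sub] using h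

theorem verticalIntegrable_inv_smul {G : ℂ → E} {σ r : ℝ} (hσ : σ ≠ 0) (hr : r < 0)
    (hG : ContinuousOn G {s : ℂ | s.re = σ})
    (hO : G =O[halfPlaneAtInfinity σ] fun s => (1 + ‖s‖) ^ r) :
    VerticalIntegrable (fun s => s⁻¹ • G s) σ := by
  refine verticalIntegrable_of_isBigO (p := 1 - r) (by linarith)
    (ContinuousOn.smul (continuousOn_id.inv₀ fun s hs h0 => hσ ?_) hG)
    (isBigO_inv_smul (halfPlaneAtInfinity_le_cobounded σ) hO)
  rw [← show s.re = σ from hs, show s = 0 from h0, zero_re]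

theorem integral_vertical_inv_smul_eq_zero [CompleteSpace E] {G : ℂ → E} {η r : ℝ} (hη : 0 < η)
    (hr : r < 0) (hG : DifferentiableOn ℂ G {s : ℂ | -η ≤ s.re}) (hG₀ : G 0 = 0)
    (hO : G =O[halfPlaneAtInfinity (-η)] fun s => (1 + ‖s‖) ^ r) :
    ∫ t : ℝ, ((-η : ℝ) + t * I : ℂ)⁻¹ • G ((-η : ℝ) + t * I) = 0 := by
  have hdslope : ∀ s : ℂ, s ≠ 0 → dslope G 0 s = s⁻¹ • G s := fun s hs => by
    rw [dslope_of_ne _ hs, slope_def_module, hG₀, sub_zero, sub_zero]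
  have hnhds : {s : ℂ | -η ≤ s.re} ∈ 𝓝 0 :=
    Filter.mem_of_superset ((isOpen_lt continuous_const continuous_re).mem_nhds
      (show -η < (0 : ℂ).re by simpa)) fun s (hs : -η < s.re) => hs.le
  have hdslopeO : dslope G 0 =O[halfPlaneAtInfinity (-η)] fun s => (1 + ‖s‖) ^ (-(1 - r)) := by
    refine (isBigO_inv_smul (halfPlaneAtInfinity_le_cobounded _) hO).congr' ?_ .rfl
    filter_upwards [halfPlaneAtInfinity_le_cobounded _ (eventually_ne_cobounded 0)] with s hs
    exact (hdslope s hs).symm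
  rw [← integral_vertical_eq_zero (by linarith) ((differentiableOn_dslope hnhds).2 hG) hdslopeO]
  refine integral_congr_ae (Eventually.of_forall fun t => (hdslope _ fun h0 => ?_).symm)
  simpa [hη.ne'] using congrArg re h0

theorem integral_vertical_inv_smul [CompleteSpace E] {G : ℂ → E} {η r : ℝ} (hη : 0 < η)
    (hr : r < 0) (hG : DifferentiableOn ℂ G {s : ℂ | -η ≤ s.re})
    (hO : G =O[halfPlaneAtInfinity (-η)] fun s => (1 + ‖s‖) ^ r) :
    ∫ t : ℝ, ((-η : ℝ) + t * I : ℂ)⁻¹ • G ((-η : ℝ) + t * I) = -(2 * Real.pi) • G 0 := by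
  -- Subtracting `q s • G 0`, with `q 0 = 1` and an explicit arctangent integral, removes the pole.
  let q : ℂ → ℂ := fun s => 2 * η / (2 * η + s)
  have hq : DifferentiableOn ℂ q {s : ℂ | -η ≤ s.re} := by
    refine (differentiableOn_const _).div (by fun_prop) fun s (hs : -η ≤ s.re) h0 => ?_
    have hre : 2 * η + s.re = 0 := by simpa using congrArg re h0
    linarith
  have hqO : q =O[halfPlaneAtInfinity (-η)] fun s => (1 + ‖s‖) ^ (-1 : ℝ) :=
    ((isBigO_add_inv_cobounded _).const_mul_left _).mono (halfPlaneAtInfinity_le_cobounded _)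
  have hdiffO : (fun s => G s - q s • G 0) =O[halfPlaneAtInfinity (-η)]
      fun s => (1 + ‖s‖) ^ max r (-1) := by
    refine (hO.trans (isBigO_one_add_norm_rpow_of_le (le_max_left _ _) _)).sub ?_
    simpa using (hqO.trans (isBigO_one_add_norm_rpow_of_le (le_max_right r _) _)).smul
      (isBigO_const_const (G 0) (one_ne_zero (α := ℝ)) _)
  have hzero := integral_vertical_inv_smul_eq_zero hη (max_lt hr neg_one_lt_zero)
    (hG.sub (hq.smul_const (G 0))) (by simp [q, hη.ne']) hdiffO
  have hGint := verticalIntegrable_inv_smul (neg_ne_zero.2 hη.ne') hr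
    (hG.continuousOn.mono fun s hs => hs.ge) hO
  have hqint := verticalIntegrable_inv_smul (neg_ne_zero.2 hη.ne') neg_one_lt_zero
    (hq.continuousOn.mono fun s hs => hs.ge) hqO
  simp only [Pi.sub_apply, smul_sub, ← smul_assoc] at hzero
  rw [integral_sub hGint (hqint.smul_const (G 0)), sub_eq_zero] at hzero
  rw [hzero, integral_smul_const]
  simp only [q, smul_eq_mul]
  rw [integral_vertical_inv_mul_div hη]
  norm_cast

theorem norm_exp_sub_one_le_rpow {z : ℂ} {θ : ℝ} (hz : z.re ≤ 0) (hθ₀ : 0 ≤ θ) (hθ₁ : θ ≤ 1) :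
    ‖cexp z - 1‖ ≤ 2 * ‖z‖ ^ θ := by
  rcases le_total ‖z‖ 1 with hsmall | hlarge
  · refine (norm_exp_sub_one_le hsmall).trans ?_
    gcongr
    exact Real.self_le_rpow_of_le_one (norm_nonneg z) hsmall hθ₁
  · have hexp : ‖cexp z‖ ≤ 1 := by rwa [norm_exp, Real.exp_le_one_iff]
    have hpow : 1 ≤ ‖z‖ ^ θ := Real.one_le_rpow hlarge hθ₀
    linarith [norm_sub_le (cexp z) 1, norm_one (α := ℂ)]

section PerronKernel

variable {X Y : ℝ}

/-- The Perron-type kernel `(Y ^ s - X ^ s) / s ^ 2`, the increment in `log x` of the absolutely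
integrable kernel `x ^ s / s ^ 2`. With no integers strictly between `X` and `Y`, integrating a
Dirichlet series against it isolates a single partial sum. -/
noncomputable def perronKernel (X Y : ℝ) (s : ℂ) : ℂ :=
  ((Y : ℂ) ^ s - (X : ℂ) ^ s) / s ^ 2

theorem differentiable_ofReal_cpow_sub_cpow (hX : 0 < X) (hY : 0 < Y) :
    Differentiable ℂ fun s : ℂ => (Y : ℂ) ^ s - (X : ℂ) ^ s := fun _ =>
  (differentiableAt_id.const_cpow (Or.inl (ofReal_ne_zero.2 hY.ne'))).sub
    (differentiableAt_id.const_cpow (Or.inl (ofReal_ne_zero.2 hX.ne')))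

theorem hasDerivAt_ofReal_cpow_sub_cpow_zero (hX : 0 < X) (hY : 0 < Y) :
    HasDerivAt (fun s : ℂ => (Y : ℂ) ^ s - (X : ℂ) ^ s) (Real.log (Y / X) : ℝ) 0 := by
  have hpow : ∀ {x : ℝ}, 0 < x → HasDerivAt (fun s : ℂ => (x : ℂ) ^ s) (Real.log x : ℝ) 0 :=
    fun {x} hx => by
      simpa [ofReal_log hx.le] using
        (hasDerivAt_id (0 : ℂ)).const_cpow (Or.inl (ofReal_ne_zero.2 hx.ne'))
  rw [Real.log_div hY.ne' hX.ne', ofReal_sub]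
  exact (hpow hY).sub (hpow hX)

theorem differentiableAt_perronKernel (hX : 0 < X) (hY : 0 < Y) {s : ℂ} (hs : s ≠ 0) :
    DifferentiableAt ℂ (perronKernel X Y) s :=
  (differentiable_ofReal_cpow_sub_cpow hX hY s).div (by fun_prop) (pow_ne_zero 2 hs)

theorem norm_ofReal_cpow_sub_cpow_le_of_re_nonpos {s : ℂ} {θ : ℝ} (hX : 0 < X) (hXY : X ≤ Y)
    (hs : s.re ≤ 0) (hθ₀ : 0 ≤ θ) (hθ₁ : θ ≤ 1) :
    ‖(Y : ℂ) ^ s - (X : ℂ) ^ s‖ ≤ 2 * X ^ s.re * (Real.log (Y / X) * ‖s‖) ^ θ := by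
  have hratio : 1 ≤ Y / X := (one_le_div hX).2 hXY
  have hfactor : (Y : ℂ) ^ s - (X : ℂ) ^ s = (X : ℂ) ^ s * (cexp (Real.log (Y / X) * s) - 1) := by
    have hY : (Y : ℂ) = (X : ℂ) * (Y / X : ℝ) := by rw [← ofReal_mul, mul_div_cancel₀ _ hX.ne']
    rw [hY, mul_cpow_ofReal_nonneg hX.le (by positivity), mul_sub, mul_one,
      cpow_def_of_ne_zero (x := ((Y / X : ℝ) : ℂ)) (ofReal_ne_zero.2 (by positivity)),
      ofReal_log (by positivity)]
  rw [hfactor, norm_mul, norm_cpow_eq_rpow_re_of_pos hX, mul_comm 2, mul_assoc]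
  gcongr
  refine (norm_exp_sub_one_le_rpow ?_ hθ₀ hθ₁).trans_eq ?_
  · rw [re_ofReal_mul]
    exact mul_nonpos_of_nonneg_of_nonpos (Real.log_nonneg hratio) hs
  · rw [norm_mul, Complex.norm_of_nonneg (Real.log_nonneg hratio)]

theorem norm_ofReal_cpow_sub_cpow_le {s : ℂ} {η : ℝ} (hX : 0 < X) (hXY : X ≤ Y)
    (hs : -η ≤ s.re) :
    ‖(Y : ℂ) ^ s - (X : ℂ) ^ s‖ ≤ (1 + (Y / X) ^ η) * Y ^ s.re := by
  have hY : 0 < Y := hX.trans_le hXY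
  have hXpow : X ^ s.re ≤ (Y / X) ^ η * Y ^ s.re :=
    calc X ^ s.re = (Y / X) ^ (-s.re) * Y ^ s.re := by
          rw [Real.rpow_neg (by positivity), Real.div_rpow hY.le hX.le]
          field_simp
      _ ≤ _ := by
          gcongr
          · exact (one_le_div hX).2 hXY
          · linarith
  calc _ ≤ Y ^ s.re + X ^ s.re := by
        simpa only [norm_cpow_eq_rpow_re_of_pos, hX, hY] using
          norm_sub_le ((Y : ℂ) ^ s) ((X : ℂ) ^ s)
    _ ≤ _ := by linarith

theorem norm_perronKernel_le {s : ℂ} {θ : ℝ} (hX : 0 < X) (hXY : X ≤ Y) (hs : s.re ≤ 0)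
    (hθ₀ : 0 ≤ θ) (hθ₁ : θ ≤ 1) :
    ‖perronKernel X Y s‖ ≤ 2 * X ^ s.re * Real.log (Y / X) ^ θ * (‖s‖ ^ θ / ‖s‖ ^ 2) := by
  have hlog : 0 ≤ Real.log (Y / X) := Real.log_nonneg ((one_le_div hX).2 hXY)
  rw [perronKernel, norm_div, norm_pow, ← mul_div_assoc, mul_assoc _ _ (‖s‖ ^ θ),
    ← Real.mul_rpow hlog (norm_nonneg s)]
  gcongr
  exact norm_ofReal_cpow_sub_cpow_le_of_re_nonpos hX hXY hs hθ₀ hθ₁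


theorem isBigO_perronKernel (hX : 0 < X) (hXY : X ≤ Y) :
    perronKernel X Y =O[cobounded ℂ ⊓ 𝓟 {s : ℂ | s.re ≤ 0}]
      fun s => X ^ s.re * (1 + ‖s‖) ^ (-2 : ℝ) := by
  have hnumerator : (fun s : ℂ => (Y : ℂ) ^ s - (X : ℂ) ^ s) =O[𝓟 {s : ℂ | s.re ≤ 0}]
      fun s => X ^ s.re := by
    refine IsBigO.of_bound 2 (eventually_principal.2 fun s hs => ?_)
    rw [Real.norm_of_nonneg (by positivity)]
    simpa using norm_ofReal_cpow_sub_cpow_le_of_re_nonpos hX hXY hs le_rfl zero_le_one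
  have hinv : (fun s : ℂ => (s ^ 2)⁻¹) =O[cobounded ℂ] fun s => (1 + ‖s‖) ^ (-2 : ℝ) := by
    have h := isBigO_inv_cobounded.mul isBigO_inv_cobounded
    rw [one_add_norm_rpow_mul_rpow, show (-1 + -1 : ℝ) = -2 by norm_num] at h
    simpa only [← inv_pow, ← sq] using h
  exact (hnumerator.mono inf_le_right).mul (hinv.mono inf_le_left)

theorem dslope_ofReal_cpow_sub_cpow {s : ℂ} (hs : s ≠ 0) :
    dslope (fun s : ℂ => (Y : ℂ) ^ s - (X : ℂ) ^ s) 0 s =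
      s⁻¹ * ((Y : ℂ) ^ s - (X : ℂ) ^ s) := by
  simp [dslope_of_ne _ hs, slope_def_module]

theorem perronKernel_eq_inv_mul_dslope (X Y : ℝ) (s : ℂ) :
    perronKernel X Y s = s⁻¹ * dslope (fun s : ℂ => (Y : ℂ) ^ s - (X : ℂ) ^ s) 0 s := by
  rcases eq_or_ne s 0 with rfl | hs
  · simp [perronKernel]
  · rw [dslope_ofReal_cpow_sub_cpow hs, perronKernel]
    field_simp

theorem isBigO_dslope_ofReal_cpow_sub_cpow_smul {g : ℂ → E} {η ε : ℝ} (hX : 0 < X) (hXY : X ≤ Y)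
    (hO : g =O[halfPlaneAtInfinity (-η)] fun s => (1 + ‖s‖) ^ ε * Y ^ (-s.re)) :
    (fun s => dslope (fun s : ℂ => (Y : ℂ) ^ s - (X : ℂ) ^ s) 0 s • g s)
      =O[halfPlaneAtInfinity (-η)] fun s => (1 + ‖s‖) ^ (-(1 - ε)) := by
  have hY : 0 < Y := hX.trans_le hXY
  have hnumerator : (fun s : ℂ => (Y : ℂ) ^ s - (X : ℂ) ^ s) =O[halfPlaneAtInfinity (-η)]
      fun s => Y ^ s.re := by
    refine (IsBigO.of_bound (1 + (Y / X) ^ η) (eventually_principal.2 fun s hs => ?_)).mono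
      (halfPlaneAtInfinity_le_principal _)
    rw [Real.norm_of_nonneg (by positivity)]
    exact norm_ofReal_cpow_sub_cpow_le hX hXY hs
  have hproduct : (fun s : ℂ => ((Y : ℂ) ^ s - (X : ℂ) ^ s) • g s)
      =O[halfPlaneAtInfinity (-η)] fun s => (1 + ‖s‖) ^ ε := by
    refine (hnumerator.smul hO).congr_right fun s => ?_
    rw [smul_eq_mul, mul_left_comm, ← Real.rpow_add hY, add_neg_cancel, Real.rpow_zero, mul_one]
  refine (isBigO_inv_smul (halfPlaneAtInfinity_le_cobounded _) hproduct).congr' ?_ .rfl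
  filter_upwards [halfPlaneAtInfinity_le_cobounded _ (eventually_ne_cobounded 0)] with s hs
  rw [dslope_ofReal_cpow_sub_cpow hs, mul_smul]

theorem integral_vertical_perronKernel_smul [CompleteSpace E] {g : ℂ → E} {η ε : ℝ}
    (hX : 0 < X) (hXY : X ≤ Y) (hη : 0 < η) (hε : ε < 1)
    (hg : DifferentiableOn ℂ g {s : ℂ | -η ≤ s.re})
    (hO : g =O[halfPlaneAtInfinity (-η)] fun s => (1 + ‖s‖) ^ ε * Y ^ (-s.re)) :
    ∫ t : ℝ, perronKernel X Y ((-η : ℝ) + t * I) • g ((-η : ℝ) + t * I) =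
      -(2 * Real.pi * Real.log (Y / X)) • g 0 := by
  have hY : 0 < Y := hX.trans_le hXY
  have hdslope : Differentiable ℂ (dslope (fun s : ℂ => (Y : ℂ) ^ s - (X : ℂ) ^ s) 0) :=
    differentiableOn_univ.1 ((differentiableOn_dslope univ_mem).2
      (differentiable_ofReal_cpow_sub_cpow hX hY).differentiableOn)
  simp only [perronKernel_eq_inv_mul_dslope, mul_smul]
  rw [integral_vertical_inv_smul (G := fun s => dslope _ 0 s • g s) hη (by linarith)
    (hdslope.differentiableOn.smul hg) (isBigO_dslope_ofReal_cpow_sub_cpow_smul hX hXY hO),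
    dslope_same, (hasDerivAt_ofReal_cpow_sub_cpow_zero hX hY).deriv,
    Complex.coe_smul, smul_smul, neg_mul]

theorem integral_vertical_perronKernel_smul_eq_zero {g : ℂ → E} {η : ℝ}
    (hX : 0 < X) (hXY : X ≤ Y) (hη : 0 < η)
    (hg : DifferentiableOn ℂ g {s : ℂ | s.re ≤ -η})
    (hO : g =O[𝓟 {s : ℂ | s.re ≤ -η}] fun s => X ^ (-s.re)) :
    ∫ t : ℝ, perronKernel X Y ((-η : ℝ) + t * I) • g ((-η : ℝ) + t * I) = 0 := by
  have hreflect : Set.MapsTo (fun s : ℂ => -s) {s | η ≤ s.re} {s | s.re ≤ -η} := fun s hs =>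
    neg_le_neg (show η ≤ s.re from hs)
  have hprincipal : Tendsto (fun s : ℂ => -s) (halfPlaneAtInfinity η)
      (𝓟 {s : ℂ | s.re ≤ -η}) :=
    (tendsto_principal_principal.2 hreflect).mono_left (halfPlaneAtInfinity_le_principal η)
  have hcobounded : Tendsto (fun s : ℂ => -s) (halfPlaneAtInfinity η)
      (cobounded ℂ ⊓ 𝓟 {s : ℂ | s.re ≤ 0}) :=
    tendsto_inf.2 ⟨tendsto_neg_cobounded.mono_left (halfPlaneAtInfinity_le_cobounded η),
      hprincipal.mono_right (principal_mono.2 fun s (hs : s.re ≤ -η) => by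
        change s.re ≤ 0
        linarith)⟩
  have hdecay : (fun s : ℂ => perronKernel X Y (-s) • g (-s)) =O[halfPlaneAtInfinity η]
      fun s => (1 + ‖s‖) ^ (-2 : ℝ) := by
    refine (((isBigO_perronKernel hX hXY).comp_tendsto hcobounded).smul
      (hO.comp_tendsto hprincipal)).congr_right fun s => ?_
    simp only [Function.comp_apply, smul_eq_mul, norm_neg, neg_re, neg_neg]
    rw [mul_right_comm, ← Real.rpow_add hX, neg_add_cancel, Real.rpow_zero, one_mul]
  have hholomorphic : DifferentiableOn ℂ (fun s : ℂ => perronKernel X Y (-s) • g (-s))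
      {s : ℂ | η ≤ s.re} := by
    refine DifferentiableOn.smul (fun s hs => ?_) (hg.comp (by fun_prop) hreflect)
    refine (DifferentiableAt.comp s (differentiableAt_perronKernel hX (hX.trans_le hXY) ?_)
      (by fun_prop)).differentiableWithinAt
    rintro h0
    rw [Set.mem_ofPred_eq, neg_eq_zero.1 h0, zero_re] at hs
    exact hs.not_gt hη
  rw [← integral_neg_eq_self]
  simpa [neg_add_rev, add_comm] using
    integral_vertical_eq_zero one_lt_two hholomorphic hdecay

theorem verticalIntegrable_norm_rpow_div_sq_mul {η θ ε : ℝ} (hη : 0 < η) (hθ : 0 ≤ θ)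
    (hθε : θ + ε < 1) :
    VerticalIntegrable (fun s : ℂ => ‖s‖ ^ θ / ‖s‖ ^ 2 * (1 + ‖s‖) ^ ε) (-η) := by
  have hne : ∀ s ∈ {s : ℂ | s.re = -η}, ‖s‖ ≠ 0 := fun s (hs : s.re = -η) h0 => by
    rw [norm_eq_zero.1 h0, zero_re] at hs
    linarith
  refine verticalIntegrable_of_isBigO (p := 2 - (θ + ε)) (by linarith) ?_ ?_
  · refine ((continuousOn_id.norm.rpow_const fun s hs => Or.inl (hne s hs)).div
      (by fun_prop) fun s hs => pow_ne_zero 2 (hne s hs)).mul ?_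
    exact ContinuousOn.rpow_const (by fun_prop) fun s _ => Or.inl (by positivity)
  · have hpow : (fun s : ℂ => ‖s‖ ^ θ) =O[cobounded ℂ] fun s => (1 + ‖s‖) ^ θ := by
      refine IsBigO.of_norm_le fun s => ?_
      rw [Real.norm_of_nonneg (by positivity)]
      gcongr
      linarith
    have hinv := isBigO_inv_cobounded.norm_left.mul isBigO_inv_cobounded.norm_left
    refine ((hpow.mul hinv).mul (isBigO_refl (fun s : ℂ => (1 + ‖s‖) ^ ε) _)).congr
      (fun s => ?_) (fun s => ?_) |>.mono (halfPlaneAtInfinity_le_cobounded _)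
    · rw [norm_inv, ← mul_inv, ← sq, div_eq_mul_inv]
    · simp only [← Real.rpow_add (show 0 < 1 + ‖s‖ by positivity)]
      ring_nf

theorem exists_norm_perronKernel_smul_le {g : ℂ → E} {η θ ε : ℝ} (hη : 0 < η) (hθ₀ : 0 ≤ θ)
    (hθ₁ : θ ≤ 1) (hO : g =O[𝓟 {s : ℂ | s.re = -η}] fun s => (1 + ‖s‖) ^ ε) :
    ∃ C : ℝ, ∀ X Y : ℝ, 0 < X → X ≤ Y → ∀ s : ℂ, s.re = -η → ‖perronKernel X Y s • g s‖ ≤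
      C * X ^ (-η) * Real.log (Y / X) ^ θ * (‖s‖ ^ θ / ‖s‖ ^ 2 * (1 + ‖s‖) ^ ε) := by
  obtain ⟨C, hC⟩ := hO.bound
  refine ⟨2 * C, fun X Y hX hXY s hs => ?_⟩
  have hg : ‖g s‖ ≤ C * (1 + ‖s‖) ^ ε := by
    simpa only [Real.norm_of_nonneg (show 0 ≤ (1 + ‖s‖) ^ ε by positivity)] using
      eventually_principal.1 hC s hs
  have hlog : 0 ≤ Real.log (Y / X) := Real.log_nonneg ((one_le_div hX).2 hXY)
  rw [norm_smul]
  calc _ ≤ 2 * X ^ s.re * Real.log (Y / X) ^ θ * (‖s‖ ^ θ / ‖s‖ ^ 2) * (C * (1 + ‖s‖) ^ ε) := by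
        gcongr
        exact norm_perronKernel_le hX hXY (by linarith) hθ₀ hθ₁
    _ = _ := by
        rw [hs]
        ring

theorem verticalIntegrable_perronKernel_smul {g : ℂ → E} {η ε : ℝ} (hX : 0 < X) (hXY : X ≤ Y)
    (hη : 0 < η) (hε : ε < 1) (hg : ContinuousOn g {s : ℂ | s.re = -η})
    (hO : g =O[𝓟 {s : ℂ | s.re = -η}] fun s => (1 + ‖s‖) ^ ε) :
    VerticalIntegrable (fun s => perronKernel X Y s • g s) (-η) := by
  obtain ⟨C, hC⟩ := exists_norm_perronKernel_smul_le hη le_rfl zero_le_one hO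
  have hkernel : ContinuousOn (perronKernel X Y) {s : ℂ | s.re = -η} := fun s hs => by
    refine (differentiableAt_perronKernel hX (hX.trans_le hXY) fun h0 => ?_).continuousAt
      |>.continuousWithinAt
    simp [h0, hη.ne'] at hs
  refine ((verticalIntegrable_norm_rpow_div_sq_mul hη le_rfl (by simpa using hε)).const_mul
    (C * X ^ (-η) * Real.log (Y / X) ^ (0 : ℝ))).mono' ?_
    (Eventually.of_forall fun t => hC X Y hX hXY _ (by simp))
  exact ((hkernel.smul hg).comp_continuous (by fun_prop) fun t => by simp).aestronglyMeasurable

theorem exists_norm_integral_perronKernel_smul_le {g : ℂ → E} {η θ ε : ℝ} (hη : 0 < η)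
    (hθ₀ : 0 ≤ θ) (hθ₁ : θ ≤ 1) (hθε : θ + ε < 1)
    (hO : g =O[𝓟 {s : ℂ | s.re = -η}] fun s => (1 + ‖s‖) ^ ε) :
    ∃ C : ℝ, ∀ X Y : ℝ, 0 < X → X ≤ Y →
      ‖∫ t : ℝ, perronKernel X Y ((-η : ℝ) + t * I) • g ((-η : ℝ) + t * I)‖ ≤
        C * X ^ (-η) * Real.log (Y / X) ^ θ := by
  obtain ⟨C, hC⟩ := exists_norm_perronKernel_smul_le hη hθ₀ hθ₁ hO
  have hweight := verticalIntegrable_norm_rpow_div_sq_mul hη hθ₀ hθε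
  refine ⟨C * ∫ t : ℝ, ‖((-η : ℝ) + t * I : ℂ)‖ ^ θ / ‖((-η : ℝ) + t * I : ℂ)‖ ^ 2 *
    (1 + ‖((-η : ℝ) + t * I : ℂ)‖) ^ ε, fun X Y hX hXY => ?_⟩
  refine (norm_integral_le_of_norm_le (hweight.const_mul _)
    (Eventually.of_forall fun t => hC X Y hX hXY _ (by simp))).trans_eq ?_
  rw [integral_const_mul]
  ring

end PerronKernel

section DirichletSeries

variable {a : ℕ → E} {F : ℂ → E} {α σ₀ ε : ℝ}

/-- The partial sum `∑_{1 ≤ n ≤ M} a_n n^{-s}` of a Dirichlet series with vector coefficients,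
indexed from `0` so that the value `a 0` is skipped. -/
noncomputable def dirichletPartialSum (a : ℕ → E) (M : ℕ) (s : ℂ) : E :=
  ∑ n ∈ Finset.range M, ((n + 1 : ℕ) : ℂ) ^ (-s) • a (n + 1)

theorem differentiable_dirichletPartialSum (a : ℕ → E) (M : ℕ) :
    Differentiable ℂ (dirichletPartialSum a M) := by
  refine Differentiable.fun_sum fun n _ => Differentiable.smul_const (fun s => ?_) _
  exact differentiableAt_id.neg.const_cpow (Or.inl (Nat.cast_ne_zero.2 n.succ_ne_zero))

theorem norm_natCast_succ_cpow_neg_smul (n : ℕ) (s : ℂ) (v : E) :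
    ‖((n + 1 : ℕ) : ℂ) ^ (-s) • v‖ = ((n + 1 : ℕ) : ℝ) ^ (-s.re) * ‖v‖ := by
  rw [norm_smul, norm_natCast_cpow_of_pos n.succ_pos, neg_re]

theorem isBigO_dirichletPartialSum_right (a : ℕ → E) (M : ℕ) (α : ℝ) :
    dirichletPartialSum a M =O[𝓟 {s : ℂ | α ≤ s.re}] fun _ => (1 : ℝ) := by
  unfold dirichletPartialSum
  refine IsBigO.fun_sum fun n _ => ?_
  refine IsBigO.of_bound (((n + 1 : ℕ) : ℝ) ^ (-α) * ‖a (n + 1)‖)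
    (eventually_principal.2 fun s (hs : α ≤ s.re) => ?_)
  rw [norm_natCast_succ_cpow_neg_smul, norm_one, mul_one]
  gcongr
  exact_mod_cast n.succ_pos

theorem isBigO_dirichletPartialSum_left (a : ℕ → E) {M : ℕ} (hM : M ≠ 0) (ρ : ℝ) :
    dirichletPartialSum a M =O[𝓟 {s : ℂ | s.re ≤ ρ}] fun s => (M : ℝ) ^ (-s.re) := by
  have hM₀ : (0 : ℝ) < M := by positivity
  unfold dirichletPartialSum
  refine IsBigO.fun_sum fun n hn => ?_
  have hnM : ((n + 1 : ℕ) : ℝ) ≤ M := by exact_mod_cast Finset.mem_range.1 hn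
  have hn₀ : (0 : ℝ) < (n + 1 : ℕ) := by positivity
  refine IsBigO.of_bound ((M / (n + 1 : ℕ) : ℝ) ^ ρ * ‖a (n + 1)‖)
    (eventually_principal.2 fun s (hs : s.re ≤ ρ) => ?_)
  rw [norm_natCast_succ_cpow_neg_smul, Real.norm_of_nonneg (by positivity), mul_right_comm]
  gcongr
  calc ((n + 1 : ℕ) : ℝ) ^ (-s.re) = (M / (n + 1 : ℕ) : ℝ) ^ s.re * (M : ℝ) ^ (-s.re) := by
        rw [Real.div_rpow hM₀.le hn₀.le, Real.rpow_neg hn₀.le, Real.rpow_neg hM₀.le]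
        field_simp
    _ ≤ _ := by
        gcongr
        exact (one_le_div hn₀).2 hnM

theorem exists_norm_le_of_tendsto_dirichletPartialSum {s : ℂ} {L : E}
    (h : Tendsto (fun M => dirichletPartialSum a M s) atTop (𝓝 L)) :
    ∃ B : ℝ, 0 ≤ B ∧ ∀ n : ℕ, ‖a (n + 1)‖ ≤ B * ((n + 1 : ℕ) : ℝ) ^ s.re := by
  have hterm := (h.comp (tendsto_add_atTop_nat 1)).sub h
  obtain ⟨B, hB⟩ := (Metric.isBounded_range_of_tendsto _ hterm).exists_norm_le
  refine ⟨B, (norm_nonneg _).trans (hB _ ⟨0, rfl⟩), fun n => ?_⟩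
  have hn := hB _ ⟨n, rfl⟩
  simp only [Function.comp_apply, dirichletPartialSum, Finset.sum_range_succ,
    add_sub_cancel_left] at hn
  rw [norm_natCast_succ_cpow_neg_smul, Real.rpow_neg (by positivity)] at hn
  exact (inv_mul_le_iff₀' (by positivity)).1 hn

theorem exists_norm_dirichletPartialSum_sub_le {σ B : ℝ} (hB₀ : 0 ≤ B)
    (hB : ∀ n : ℕ, ‖a (n + 1)‖ ≤ B * ((n + 1 : ℕ) : ℝ) ^ σ) (M : ℕ) :
    ∃ C : ℝ, ∀ N ≥ M, ∀ s : ℂ, σ + 2 ≤ s.re →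
      ‖dirichletPartialSum a N s - dirichletPartialSum a M s‖ ≤
        C * ((M + 1 : ℕ) : ℝ) ^ (-s.re) := by
  have hsummable : Summable fun n : ℕ => ((n + 1 : ℕ) : ℝ) ^ (-2 : ℝ) :=
    (summable_nat_add_iff 1).2 (Real.summable_nat_rpow.2 (by norm_num))
  refine ⟨B * ((M + 1 : ℕ) : ℝ) ^ (σ + 2) * ∑' n : ℕ, ((n + 1 : ℕ) : ℝ) ^ (-2 : ℝ),
    fun N hMN s hs => ?_⟩
  have hterm : ∀ n ∈ Finset.Ico M N, ‖((n + 1 : ℕ) : ℂ) ^ (-s) • a (n + 1)‖ ≤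
      B * ((M + 1 : ℕ) : ℝ) ^ (σ + 2 - s.re) * ((n + 1 : ℕ) : ℝ) ^ (-2 : ℝ) := fun n hn => by
    have hMn : ((M + 1 : ℕ) : ℝ) ≤ (n + 1 : ℕ) := by
      exact_mod_cast Nat.succ_le_succ (Finset.mem_Ico.1 hn).1
    have hn₀ : (0 : ℝ) < (n + 1 : ℕ) := by positivity
    calc _ ≤ ((n + 1 : ℕ) : ℝ) ^ (-s.re) * (B * ((n + 1 : ℕ) : ℝ) ^ σ) := by
          rw [norm_natCast_succ_cpow_neg_smul]
          gcongr
          exact hB n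
      _ = B * ((n + 1 : ℕ) : ℝ) ^ (σ + 2 - s.re) * ((n + 1 : ℕ) : ℝ) ^ (-2 : ℝ) := by
          rw [mul_left_comm, mul_assoc, ← Real.rpow_add hn₀, ← Real.rpow_add hn₀]
          ring_nf
      _ ≤ _ := by
          gcongr B * ?_ * _
          exact Real.rpow_le_rpow_of_nonpos (by positivity) hMn (by linarith)
  rw [dirichletPartialSum, dirichletPartialSum, ← Finset.sum_Ico_eq_sub _ hMN]
  calc _ ≤ _ := norm_sum_le_of_le _ hterm
    _ ≤ B * ((M + 1 : ℕ) : ℝ) ^ (σ + 2 - s.re) * ∑' n : ℕ, ((n + 1 : ℕ) : ℝ) ^ (-2 : ℝ) := by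
        rw [← Finset.mul_sum]
        gcongr
        exact hsummable.sum_le_tsum _ fun n _ => by positivity
    _ = _ := by
        rw [sub_eq_add_neg (σ + 2), Real.rpow_add (by positivity)]
        ring

theorem isBigO_sub_dirichletPartialSum_of_tendsto
    (hFeq : ∀ s : ℂ, σ₀ < s.re → Tendsto (fun M => dirichletPartialSum a M s) atTop (𝓝 (F s)))
    (M : ℕ) :
    (fun s => F s - dirichletPartialSum a M s) =O[𝓟 {s : ℂ | σ₀ + 3 ≤ s.re}]
      fun s => ((M + 1 : ℕ) : ℝ) ^ (-s.re) := by
  obtain ⟨B, hB₀, hB⟩ := exists_norm_le_of_tendsto_dirichletPartialSum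
    (hFeq (σ₀ + 1 : ℝ) (by simp))
  obtain ⟨C, hC⟩ := exists_norm_dirichletPartialSum_sub_le hB₀ hB M
  refine IsBigO.of_bound C (eventually_principal.2 fun s (hs : σ₀ + 3 ≤ s.re) => ?_)
  rw [Real.norm_of_nonneg (by positivity)]
  refine le_of_tendsto ((hFeq s (by linarith)).sub_const _).norm ?_
  filter_upwards [eventually_ge_atTop M] with N hN
  exact hC N hN s (by rw [ofReal_re]; linarith)

theorem isBigO_one_one_add_norm_rpow (hε : 0 ≤ ε) (l : Filter ℂ) :
    (fun _ => (1 : ℝ)) =O[l] fun s : ℂ => (1 + ‖s‖) ^ ε := by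
  simpa using isBigO_one_add_norm_rpow_of_le hε l

theorem isBigO_sub_dirichletPartialSum (hε : 0 ≤ ε)
    (hFeq : ∀ s : ℂ, σ₀ < s.re → Tendsto (fun M => dirichletPartialSum a M s) atTop (𝓝 (F s)))
    (hFO : F =O[𝓟 {s : ℂ | α ≤ s.re}] fun s => (1 + ‖s‖) ^ ε) (M : ℕ) :
    (fun s => F s - dirichletPartialSum a M s) =O[𝓟 {s : ℂ | α ≤ s.re}]
      fun s => (1 + ‖s‖) ^ ε * ((M + 1 : ℕ) : ℝ) ^ (-s.re) := by
  have hstrip : (fun s => F s - dirichletPartialSum a M s)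
      =O[𝓟 {s : ℂ | α ≤ s.re ∧ s.re ≤ σ₀ + 3}]
        fun s => (1 + ‖s‖) ^ ε * ((M + 1 : ℕ) : ℝ) ^ (-s.re) := by
    have hle : 𝓟 {s : ℂ | α ≤ s.re ∧ s.re ≤ σ₀ + 3} ≤ 𝓟 {s : ℂ | α ≤ s.re} :=
      principal_mono.2 fun s hs => hs.1
    have hone : (fun _ => (1 : ℝ)) =O[𝓟 {s : ℂ | α ≤ s.re ∧ s.re ≤ σ₀ + 3}]
        fun s => ((M + 1 : ℕ) : ℝ) ^ (-s.re) := by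
      refine IsBigO.of_bound (((M + 1 : ℕ) : ℝ) ^ (σ₀ + 3)) (eventually_principal.2 fun s hs => ?_)
      rw [norm_one, Real.norm_of_nonneg (by positivity), ← Real.rpow_add (by positivity)]
      exact Real.one_le_rpow (by simp) (by linarith [hs.2])
    have hsub := hFO.sub ((isBigO_dirichletPartialSum_right a M α).trans
      (isBigO_one_one_add_norm_rpow hε _))
    simpa only [smul_eq_mul, one_smul, mul_comm] using hone.smul (hsub.mono hle)
  have hright : (fun s => F s - dirichletPartialSum a M s) =O[𝓟 {s : ℂ | σ₀ + 3 ≤ s.re}]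
      fun s => (1 + ‖s‖) ^ ε * ((M + 1 : ℕ) : ℝ) ^ (-s.re) := by
    simpa only [smul_eq_mul, one_smul] using
      (isBigO_one_one_add_norm_rpow hε _).smul (isBigO_sub_dirichletPartialSum_of_tendsto hFeq M)
  refine (hstrip.sup hright).mono ?_
  rw [sup_principal, principal_mono]
  exact fun s hs => (le_total s.re (σ₀ + 3)).imp (fun h => ⟨hs, h⟩) id

theorem integral_perronKernel_smul_eq_sub_dirichletPartialSum [CompleteSpace E] {η : ℝ}
    (hη : 0 < η) (hε₀ : 0 ≤ ε) (hε₁ : ε < 1) (hF : DifferentiableOn ℂ F {s : ℂ | -η ≤ s.re})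
    (hFeq : ∀ s : ℂ, σ₀ < s.re → Tendsto (fun M => dirichletPartialSum a M s) atTop (𝓝 (F s)))
    (hFO : F =O[𝓟 {s : ℂ | -η ≤ s.re}] fun s => (1 + ‖s‖) ^ ε) {M : ℕ} (hM : M ≠ 0) :
    ∫ t : ℝ, perronKernel M (M + 1 : ℕ) ((-η : ℝ) + t * I) • F ((-η : ℝ) + t * I) =
      -(2 * Real.pi * Real.log ((M + 1 : ℕ) / M)) • (F 0 - dirichletPartialSum a M 0) := by
  have hX : (0 : ℝ) < M := by positivity
  have hXY : (M : ℝ) ≤ (M + 1 : ℕ) := by simp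
  have hP := differentiable_dirichletPartialSum a M
  have hPO := (isBigO_dirichletPartialSum_right a M (-η)).trans (isBigO_one_one_add_norm_rpow hε₀ _)
  have hline : {s : ℂ | s.re = -η} ⊆ {s : ℂ | -η ≤ s.re} := fun s hs => hs.ge
  have hremainder := integral_vertical_perronKernel_smul hX hXY hη hε₁ (hF.sub hP.differentiableOn)
    ((isBigO_sub_dirichletPartialSum hε₀ hFeq hFO M).mono (halfPlaneAtInfinity_le_principal _))
  have hpartial := integral_vertical_perronKernel_smul_eq_zero hX hXY hη hP.differentiableOn
    (isBigO_dirichletPartialSum_left a hM (-η))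
  have hFint := verticalIntegrable_perronKernel_smul hX hXY hη hε₁ (hF.continuousOn.mono hline)
    (hFO.mono (principal_mono.2 hline))
  have hPint := verticalIntegrable_perronKernel_smul hX hXY hη hε₁ hP.continuous.continuousOn
    (hPO.mono (principal_mono.2 hline))
  simp only [Pi.sub_apply, smul_sub] at hremainder
  rw [integral_sub hFint hPint, hpartial, sub_zero] at hremainder
  rw [hremainder, smul_sub]

theorem inv_two_mul_le_log_succ_div {M : ℕ} (hM : M ≠ 0) :
    (2 * M : ℝ)⁻¹ ≤ Real.log ((M + 1 : ℕ) / M) := by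
  have hM₁ : (1 : ℝ) ≤ M := by exact_mod_cast Nat.one_le_iff_ne_zero.2 hM
  calc (2 * M : ℝ)⁻¹ ≤ ((M + 1 : ℕ) : ℝ)⁻¹ := by
        gcongr
        push_cast
        linarith
    _ = 1 - ((M + 1 : ℕ) / M : ℝ)⁻¹ := by
        push_cast
        field_simp
        ring
    _ ≤ _ := Real.one_sub_inv_le_log_of_pos (by positivity)

theorem log_succ_div_rpow_neg_le {M : ℕ} (hM : M ≠ 0) {κ : ℝ} (hκ : 0 ≤ κ) :
    Real.log ((M + 1 : ℕ) / M) ^ (-κ) ≤ 2 ^ κ * (M : ℝ) ^ κ := by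
  rw [← Real.mul_rpow zero_le_two M.cast_nonneg, ← inv_inv (2 * M : ℝ),
    Real.inv_rpow (by positivity), ← Real.rpow_neg (by positivity)]
  exact Real.rpow_le_rpow_of_nonpos (by positivity) (inv_two_mul_le_log_succ_div hM) (by linarith)

theorem isBigO_apply_zero_sub_dirichletPartialSum [CompleteSpace E] {η κ : ℝ} (hη : 0 < η)
    (hε₀ : 0 ≤ ε) (hεκ : ε < κ) (hκ : κ ≤ 1) (hF : DifferentiableOn ℂ F {s : ℂ | -η ≤ s.re})
    (hFeq : ∀ s : ℂ, σ₀ < s.re → Tendsto (fun M => dirichletPartialSum a M s) atTop (𝓝 (F s)))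
    (hFO : F =O[𝓟 {s : ℂ | -η ≤ s.re}] fun s => (1 + ‖s‖) ^ ε) :
    (fun M : ℕ => F 0 - dirichletPartialSum a M 0) =O[atTop] fun M => (M : ℝ) ^ (κ - η) := by
  obtain ⟨C, hC⟩ := exists_norm_integral_perronKernel_smul_le (θ := 1 - κ) hη (by linarith)
    (by linarith) (by linarith) (hFO.mono (principal_mono.2 fun s hs => hs.ge))
  refine IsBigO.of_bound (2 ^ κ * (|C| / (2 * Real.pi))) ?_
  filter_upwards [eventually_ne_atTop 0] with M hM
  have hM₀ : (0 : ℝ) < M := by positivity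
  set ℓ := Real.log ((M + 1 : ℕ) / M)
  have hℓ : 0 < ℓ := Real.log_pos ((one_lt_div hM₀).2 (by simp))
  have hperron : 2 * Real.pi * ℓ * ‖F 0 - dirichletPartialSum a M 0‖ ≤
      C * (M : ℝ) ^ (-η) * ℓ ^ (1 - κ) := by
    have h := hC M (M + 1 : ℕ) hM₀ (by simp)
    rwa [integral_perronKernel_smul_eq_sub_dirichletPartialSum hη hε₀ (by linarith) hF hFeq hFO hM,
      norm_smul, norm_neg, Real.norm_of_nonneg (by positivity)] at h
  calc ‖F 0 - dirichletPartialSum a M 0‖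
      ≤ C * (M : ℝ) ^ (-η) * ℓ ^ (1 - κ) / (2 * Real.pi * ℓ) :=
        (le_div_iff₀' (by positivity)).2 hperron
    _ = C / (2 * Real.pi) * (M : ℝ) ^ (-η) * ℓ ^ (-κ) := by
        rw [sub_eq_add_neg, Real.rpow_add hℓ, Real.rpow_one]
        field_simp
    _ ≤ |C| / (2 * Real.pi) * (M : ℝ) ^ (-η) * (2 ^ κ * (M : ℝ) ^ κ) := by
        gcongr
        · exact le_abs_self C
        · exact log_succ_div_rpow_neg_le hM (by linarith)
    _ = 2 ^ κ * (|C| / (2 * Real.pi)) * ‖(M : ℝ) ^ (κ - η)‖ := by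
        rw [Real.norm_of_nonneg (by positivity), sub_eq_add_neg, Real.rpow_add hM₀]
        ring

theorem dirichletPartialSum_cpow_neg_smul (a : ℕ → E) (w : ℂ) (M : ℕ) (s : ℂ) :
    dirichletPartialSum (fun n => (n : ℂ) ^ (-w) • a n) M s = dirichletPartialSum a M (w + s) := by
  refine Finset.sum_congr rfl fun n _ => ?_
  rw [smul_smul, ← cpow_add _ _ (Nat.cast_ne_zero.2 n.succ_ne_zero), neg_add_rev]

end DirichletSeries

/-- A growth exponent `ε < 1` on `Re s ≥ α` costs `ε` in the abscissa of convergence. -/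
theorem stmt_12_general [CompleteSpace E] (a : ℕ → E) (F : ℂ → E) {α σ₀ ε : ℝ} (hε₀ : 0 ≤ ε)
    (hε₁ : ε < 1) (hF : DifferentiableOn ℂ F {s : ℂ | α ≤ s.re})
    (hFeq : ∀ s : ℂ, σ₀ < s.re → Tendsto (fun M => dirichletPartialSum a M s) atTop (𝓝 (F s)))
    (hFO : F =O[𝓟 {s : ℂ | α ≤ s.re}] fun s => (1 + ‖s‖) ^ ε) (w : ℂ) (hw : α + ε < w.re) :
    Tendsto (fun M => dirichletPartialSum a M w) atTop (𝓝 (F w)) := by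
  let η := w.re - α
  have hη : ε < η := by linarith
  obtain ⟨κ, hεκ, hκ⟩ := exists_between (lt_min hε₁ hη)
  have hshift : Set.MapsTo (fun s : ℂ => w + s) {s | -η ≤ s.re} {s | α ≤ s.re} :=
    fun s (hs : -(w.re - α) ≤ s.re) => by
      change α ≤ w.re + s.re
      linarith
  have hrate := isBigO_apply_zero_sub_dirichletPartialSum (σ₀ := σ₀ - w.re)
    (a := fun n => (n : ℂ) ^ (-w) • a n) (F := fun s => F (w + s)) (hε₀.trans_lt hη) hε₀ hεκ
    (hκ.le.trans (min_le_left _ _)) (hF.comp (by fun_prop) hshift)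
    (fun s hs => by
      simp only [dirichletPartialSum_cpow_neg_smul]
      exact hFeq (w + s) (by rw [add_re]; linarith))
    ((hFO.comp_tendsto (tendsto_principal_principal.2 hshift)).trans
      ((isTheta_one_add_norm_add_rpow w ε).isBigO.mono le_top))
  have hdecay : Tendsto (fun M : ℕ => (M : ℝ) ^ (κ - η)) atTop (𝓝 0) := by
    rw [← neg_sub]
    exact (tendsto_rpow_neg_atTop (sub_pos.2 (hκ.trans_le (min_le_right _ _)))).comp
      tendsto_natCast_atTop_atTop
  simpa [dirichletPartialSum_cpow_neg_smul] using
    (hrate.trans_tendsto hdecay).const_sub (F w)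

end Schnee

/-- **Schnee's theorem.** If the Dirichlet series `∑ a_n n^{-s}` converges at some
point `s₀`, `F` is analytic on `Ω₀ = {Re s > 0}`, agrees with the sum of the series
on `Re s > Re s₀`, and for every `δ > 0` and `ε > 0` satisfies `|F(s)| ≤ C(1+|s|)^ε`
on `Re s ≥ δ`, then the series converges to `F(s)` at every `s` with `Re s > 0`. -/
theorem stmt_12 (a : ℕ → ℂ) (s₀ : ℂ) (L₀ : ℂ)
    (hconv : Tendsto (fun M : ℕ => ∑ n ∈ Finset.range M, a (n + 1) * ((n + 1 : ℕ) : ℂ) ^ (-s₀))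
      atTop (nhds L₀))
    (F : ℂ → ℂ)
    (hF : DifferentiableOn ℂ F {s : ℂ | 0 < s.re})
    (hFeq : ∀ s : ℂ, s₀.re < s.re →
      Tendsto (fun M : ℕ => ∑ n ∈ Finset.range M, a (n + 1) * ((n + 1 : ℕ) : ℂ) ^ (-s))
        atTop (nhds (F s)))
    (hgrowth : ∀ δ : ℝ, 0 < δ → ∀ ε : ℝ, 0 < ε → ∃ C : ℝ, 0 < C ∧
      ∀ s : ℂ, δ ≤ s.re → ‖F s‖ ≤ C * (1 + ‖s‖) ^ ε) :
    ∀ s : ℂ, 0 < s.re →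
      Tendsto (fun M : ℕ => ∑ n ∈ Finset.range M, a (n + 1) * ((n + 1 : ℕ) : ℂ) ^ (-s))
        atTop (nhds (F s)) := by
  intro s hs
  obtain ⟨ε, hε₀, hε⟩ := exists_between (lt_min (half_pos hs) one_pos)
  obtain ⟨C, -, hC⟩ := hgrowth (s.re / 2) (half_pos hs) ε hε₀
  have hFO : F =O[𝓟 {z : ℂ | s.re / 2 ≤ z.re}] fun z => (1 + ‖z‖) ^ ε :=
    .of_bound C (eventually_principal.2 fun z hz => (hC z hz).trans_eq
      (by rw [Real.norm_of_nonneg (by positivity)]))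
  simpa only [dirichletPartialSum, smul_eq_mul, mul_comm] using
    stmt_12_general a F hε₀.le (hε.trans_le (min_le_right _ _))
      (hF.mono fun z hz => (half_pos hs).trans_le hz)
      (by simpa only [dirichletPartialSum, smul_eq_mul, mul_comm] using hFeq) hFO s
      (by linarith [hε.trans_le (min_le_left _ _)])
end

section
/- Let a : ℕ≥1 → ℂ and σ_0 ∈ ℝ with ∑_{n=1}^∞ |a_n| n^{-σ_0} < ∞, and let f(σ_0 + it) = ∑_{n=1}^∞ a_n n^{-σ_0 - it} for t ∈ ℝ. Then for every real x > 0: if x = n for a positive integer n, then lim_{T→∞} (1/(2T)) ∫_{-T}^{T} f(σ_0 + it)·x^{σ_0 + it} dt = a_n; and if x is not a positive integer, then lim_{T→∞} (1/(2T)) ∫_{-T}^{T} f(σ_0 + it)·x^{σ_0 + it} dt = 0. -/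
open Filter

/-!
Multiplied by `x ^ s`, the `n`-th term of the series becomes `a n * (x / n) ^ s`. On the line
`s = σ₀ + it` this is a constant multiple of the oscillation `exp (i t log (x / n))`, whose average
over `[-T, T]` tends to `0` unless `x = n`. The terms are dominated by a summable sequence uniformly
in `t`, so the averages and the limit `T → ∞` can both be taken term by term.
-/

open MeasureTheory Topology

section Average

variable {α E : Type*} [MeasurableSpace α] {μ : Measure α} [IsFiniteMeasure μ]
  [NormedAddCommGroup E] [NormedSpace ℝ E]

theorem norm_average_le_of_norm_le_const {g : α → E} {C : ℝ} (hC : 0 ≤ C)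
    (hg : ∀ᵐ x ∂μ, ‖g x‖ ≤ C) : ‖⨍ x, g x ∂μ‖ ≤ C := by
  rw [average_eq, norm_smul, norm_inv, Real.norm_of_nonneg measureReal_nonneg]
  exact inv_mul_le_of_le_mul₀ measureReal_nonneg hC <|
    (norm_integral_le_of_norm_le_const hg).trans_eq (mul_comm _ _)

theorem hasSum_average_of_summable_bound {ι : Type*} [Countable ι] [CompleteSpace E]
    {g : ι → α → E} {u : ι → ℝ} (hmeas : ∀ i, AEStronglyMeasurable (g i) μ)
    (hu : Summable u) (hbound : ∀ i x, ‖g i x‖ ≤ u i) :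
    HasSum (fun i => ⨍ x, g i x ∂μ) (⨍ x, ∑' i, g i x ∂μ) := by
  simp only [average_eq]
  exact (hasSum_integral_of_dominated_convergence (fun i _ => u i) hmeas
    (fun i => .of_forall (hbound i)) (.of_forall fun _ => hu) (integrable_const _)
    (.of_forall fun x => (hu.of_norm_bounded fun i => hbound i x).hasSum)).const_smul _

end Average

section MeanValue

variable {E : Type*} [NormedAddCommGroup E] [NormedSpace ℝ E]

/-- `g` has Bohr mean value `m`: the averages of `g` over the symmetric intervals `[-T, T]` tend to
`m` as `T → ∞`. -/
def HasMeanValue (g : ℝ → E) (m : E) : Prop :=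
  Tendsto (fun T : ℝ => ⨍ t in (-T)..T, g t) atTop (𝓝 m)

theorem hasMeanValue_iff_tendsto_mul_integral {g : ℝ → ℂ} {m : ℂ} :
    HasMeanValue g m ↔
      Tendsto (fun T : ℝ => (1 / (2 * T) : ℂ) * ∫ t in (-T)..T, g t) atTop (𝓝 m) := by
  have average_eq_mul_integral (T : ℝ) :
      ⨍ t in (-T)..T, g t = (1 / (2 * T) : ℂ) * ∫ t in (-T)..T, g t := by
    rw [interval_average_eq, Complex.real_smul, sub_neg_eq_add, ← two_mul, one_div]
    push_cast
    rfl
  simp only [HasMeanValue, average_eq_mul_integral]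

theorem hasMeanValue_const [CompleteSpace E] (m : E) : HasMeanValue (fun _ => m) m := by
  refine tendsto_const_nhds.congr' ?_
  filter_upwards [eventually_gt_atTop 0] with T hT
  rw [interval_average_eq, intervalIntegral.integral_const, inv_smul_smul₀ (by linarith)]

theorem HasMeanValue.const_smul {𝕜 : Type*} [NormedDivisionRing 𝕜] [Module 𝕜 E]
    [NormSMulClass 𝕜 E] [SMulCommClass ℝ 𝕜 E] {g : ℝ → E} {m : E} (hg : HasMeanValue g m) (c : 𝕜) :
    HasMeanValue (fun t => c • g t) (c • m) := by
  refine (Tendsto.const_smul hg c).congr fun T => ?_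
  rw [interval_average_eq, interval_average_eq, intervalIntegral.integral_smul, ← smul_comm]

theorem hasMeanValue_zero_of_norm_integral_le {g : ℝ → E} {C : ℝ}
    (hC : ∀ T : ℝ, ‖∫ t in (-T)..T, g t‖ ≤ C) : HasMeanValue g 0 := by
  have length_inv_tendsto : Tendsto (fun T : ℝ => (T - -T)⁻¹) atTop (𝓝 0) :=
    tendsto_inv_atTop_zero.comp <| by
      simpa only [sub_neg_eq_add, id] using tendsto_id.atTop_add_atTop tendsto_id
  simp only [HasMeanValue, interval_average_eq]
  exact length_inv_tendsto.zero_smul_isBoundedUnder_le (isBoundedUnder_of ⟨C, hC⟩)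

theorem HasMeanValue.tsum {ι : Type*} [Countable ι] [CompleteSpace E] {g : ι → ℝ → E} {m : ι → E}
    {u : ι → ℝ} (hg : ∀ i, HasMeanValue (g i) (m i))
    (hmeas : ∀ i, AEStronglyMeasurable (g i)) (hu : Summable u)
    (hbound : ∀ i t, ‖g i t‖ ≤ u i) :
    HasMeanValue (fun t => ∑' i, g i t) (∑' i, m i) := by
  have (T : ℝ) : IsFiniteMeasure (volume.restrict (Set.uIoc (-T) T)) :=
    inferInstanceAs (IsFiniteMeasure (volume.restrict (Set.Ioc _ _)))
  have average_tsum (T : ℝ) : ∑' i, ⨍ t in (-T)..T, g i t = ⨍ t in (-T)..T, ∑' i, g i t :=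
    (hasSum_average_of_summable_bound (fun i => (hmeas i).restrict) hu hbound).tsum_eq
  refine (tendsto_tsum_of_dominated_convergence hu hg (.of_forall fun T i => ?_)).congr average_tsum
  exact norm_average_le_of_norm_le_const ((norm_nonneg _).trans (hbound i 0))
    (.of_forall (hbound i))

end MeanValue

section Exponentials

open Complex

theorem norm_integral_exp_mul_I_mul_le {l : ℝ} (hl : l ≠ 0) (a b : ℝ) :
    ‖∫ t in a..b, exp (l * I * t)‖ ≤ 2 / |l| := by
  have norm_exp_eq_one (t : ℝ) : ‖exp (l * I * t)‖ = 1 := by simp [norm_exp]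
  rw [integral_exp_mul_complex (by simpa using hl), norm_div]
  gcongr
  · calc ‖exp (l * I * b) - exp (l * I * a)‖
        ≤ ‖exp (l * I * b)‖ + ‖exp (l * I * a)‖ := norm_sub_le _ _
      _ = 2 := by rw [norm_exp_eq_one, norm_exp_eq_one, one_add_one_eq_two]
  · simp

theorem hasMeanValue_cpow_add_mul_I {r : ℝ} (hr : 0 < r) (σ : ℝ) :
    HasMeanValue (fun t : ℝ => (r : ℂ) ^ (σ + t * I : ℂ)) (if r = 1 then 1 else 0) := by
  split_ifs with hr_one
  · simpa only [hr_one, ofReal_one, one_cpow] using hasMeanValue_const (1 : ℂ)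
  · have cpow_eq (t : ℝ) :
        (r : ℂ) ^ (σ + t * I : ℂ) = (r : ℂ) ^ (σ : ℂ) * exp (Real.log r * I * t) := by
      have hr_ne : (r : ℂ) ≠ 0 := ofReal_ne_zero.2 hr.ne'
      rw [cpow_add _ _ hr_ne, cpow_def_of_ne_zero hr_ne (t * I), ofReal_log hr.le,
        mul_right_comm, mul_assoc]
    have hasMeanValue_exp : HasMeanValue (fun t : ℝ => exp (Real.log r * I * t)) 0 :=
      hasMeanValue_zero_of_norm_integral_le fun T =>
        norm_integral_exp_mul_I_mul_le (Real.log_ne_zero_of_pos_of_ne_one hr hr_one) (-T) T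
    simpa only [cpow_eq, smul_eq_mul, mul_zero] using
      hasMeanValue_exp.const_smul ((r : ℂ) ^ (σ : ℂ))

theorem hasMeanValue_tsum_mul_cpow {ι : Type*} [Countable ι] {c : ι → ℂ} {r : ι → ℝ} {σ : ℝ}
    (hr : ∀ i, 0 < r i) (hc : Summable fun i => ‖c i‖ * r i ^ σ) :
    HasMeanValue (fun t : ℝ => ∑' i, c i * (r i : ℂ) ^ (σ + t * I : ℂ))
      (∑' i, if r i = 1 then c i else 0) := by
  have hasMeanValue_term (i : ι) :
      HasMeanValue (fun t : ℝ => c i * (r i : ℂ) ^ (σ + t * I : ℂ))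
        (if r i = 1 then c i else 0) := by
    simpa only [smul_eq_mul, mul_ite, mul_one, mul_zero] using
      (hasMeanValue_cpow_add_mul_I (hr i) σ).const_smul (c i)
  have norm_term (i : ι) (t : ℝ) : ‖c i * (r i : ℂ) ^ (σ + t * I : ℂ)‖ = ‖c i‖ * r i ^ σ := by
    simp [norm_cpow_eq_rpow_re_of_pos (hr i)]
  have continuous_term (i : ι) : Continuous fun t : ℝ => c i * (r i : ℂ) ^ (σ + t * I : ℂ) :=
    continuous_const.mul <| (by fun_prop : Continuous fun t : ℝ => (σ + t * I : ℂ)).const_cpow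
      (.inl (ofReal_ne_zero.2 (hr i).ne'))
  exact .tsum hasMeanValue_term (fun i => (continuous_term i).aestronglyMeasurable) hc
    fun i t => (norm_term i t).le

theorem hasMeanValue_tsum_cpow_neg_mul_cpow {ι : Type*} [Countable ι] {b : ι → ℂ} {l : ι → ℝ}
    {σ x : ℝ} (hl : ∀ i, 0 < l i) (hb : Summable fun i => ‖b i‖ * l i ^ (-σ)) (hx : 0 < x) :
    HasMeanValue
      (fun t : ℝ => (∑' i, b i * (l i : ℂ) ^ (-(σ + t * I : ℂ))) * (x : ℂ) ^ (σ + t * I : ℂ))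
      (∑' i, if l i = x then b i else 0) := by
  have summable_ratio : Summable fun i => ‖b i‖ * (x / l i) ^ σ :=
    (hb.mul_right (x ^ σ)).congr fun i => by
      rw [Real.div_rpow hx.le (hl i).le, Real.rpow_neg (hl i).le]
      ring
  have term_mul_cpow (i : ι) (s : ℂ) :
      b i * (l i : ℂ) ^ (-s) * (x : ℂ) ^ s = b i * ((x / l i : ℝ) : ℂ) ^ s := by
    rw [ofReal_div, div_cpow_ofReal_nonneg hx.le (hl i).le, cpow_neg]
    ring
  have ratio_eq_one_iff (i : ι) : x / l i = 1 ↔ l i = x := by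
    rw [div_eq_one_iff_eq (hl i).ne', eq_comm]
  simpa only [← tsum_mul_right, term_mul_cpow, ratio_eq_one_iff] using
    hasMeanValue_tsum_mul_cpow (fun i => div_pos hx (hl i)) summable_ratio

end Exponentials

/-- Coefficient formula for absolutely convergent Dirichlet series: if
`∑ |a_n| n^{-σ₀} < ∞` and `f(σ₀ + it) = ∑ a_n n^{-σ₀ - it}`, then for `x > 0`,
`lim_{T→∞} (1/2T) ∫_{-T}^T f(σ₀+it) x^{σ₀+it} dt` equals `a_n` if `x = n` and `0`
if `x` is not a positive integer. -/
theorem stmt_13 (a : ℕ → ℂ) (σ₀ : ℝ)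
    (habs : Summable (fun n : ℕ => ‖a (n + 1)‖ * ((n + 1 : ℕ) : ℝ) ^ (-σ₀)))
    (f : ℝ → ℂ)
    (hf : ∀ t : ℝ, f t = ∑' n : ℕ,
      a (n + 1) * ((n + 1 : ℕ) : ℂ) ^ (-((σ₀ : ℂ) + (t : ℂ) * Complex.I)))
    (x : ℝ) (hx : 0 < x) :
    (∀ n : ℕ, 1 ≤ n → x = (n : ℝ) →
      Tendsto (fun T : ℝ => (1 / (2 * T) : ℂ) *
          ∫ t in (-T)..T, f t * (x : ℂ) ^ ((σ₀ : ℂ) + (t : ℂ) * Complex.I))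
        atTop (nhds (a n))) ∧
    ((∀ n : ℕ, 1 ≤ n → x ≠ (n : ℝ)) →
      Tendsto (fun T : ℝ => (1 / (2 * T) : ℂ) *
          ∫ t in (-T)..T, f t * (x : ℂ) ^ ((σ₀ : ℂ) + (t : ℂ) * Complex.I))
        atTop (nhds 0)) := by
  have mean_value := hasMeanValue_tsum_cpow_neg_mul_cpow
    (fun n : ℕ => Nat.cast_pos.2 n.succ_pos) habs hx
  simp only [Complex.ofReal_natCast, ← hf] at mean_value
  simp only [← hasMeanValue_iff_tendsto_mul_integral]
  refine ⟨?_, fun x_ne => ?_⟩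
  · rintro (_ | m) hm rfl
    · contradiction
    · simpa using mean_value
  · have succ_ne_x (n : ℕ) : ((n + 1 : ℕ) : ℝ) ≠ x := (x_ne (n + 1) n.succ_pos).symm
    simpa only [succ_ne_x, if_false, tsum_zero] using mean_value
end
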